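/- Let ℤ² denote the square lattice: the simple graph with vertex set ℤ × ℤ in which (a,b) and (c,d) are adjacent if and only if |a − c| + |b − d| = 1, and write σ_n = σ_n((0,0)). If σ_n^{1/n} → μ as n → ∞, then σ_{n+2}/σ_n → μ² as n → ∞. -/

import Mathlib

open Filter

/-- The number of `n`-step self-avoiding walks in `G` starting at `v`. -/
noncomputable def sawCount {V : Type*} (G : SimpleGraph V) (v : V) (n : ℕ) : ℕ :=
  Nat.card {p : Σ w : V, G.Walk v w // p.2.IsPath ∧ p.2.length = n}

/-- The square lattice `ℤ²`: vertex set `ℤ × ℤ`, with `(a,b)` and `(c,d)` adjacent iff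
`|a − c| + |b − d| = 1`. -/
def squareLattice : SimpleGraph (ℤ × ℤ) :=
  SimpleGraph.fromRel (fun x y => |x.1 - y.1| + |x.2 - y.2| = 1)

/-!
Replacing an edge of a self-avoiding walk by a path of length three inserts two vertices and creates
a U-turn. Counting in two ways the walks with a marked U-turn expresses `σ_{n+2} / σ_n` as the mean,
over the `n`-step walks, of the ratio between insertions and U-turns, up to `O(1 / n)`; counting
those with two marked U-turns shows that the mean of the square of this ratio is at most
`σ_{n+4} / σ_n + O(1 / n)`. The errors are small because most walks have a positive density of
U-turns, while any insertion interferes with boundedly many others. By Cauchy–Schwarz, the ratios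
`φ n = σ_{n+2} / σ_n` satisfy `φ n ^ 2 - D / n ≤ φ n * φ (n + 2)`. Hence `max 0 (log φ)` is slowly
decreasing along each residue class, and a Tauberian argument upgrades `σ_n ^ (1 / n) → μ` to
`φ n → μ ^ 2`.

Walks with few U-turns are exponentially rare: weighting each U-turn by a small factor gives them a
growth rate of at most `2.467`, whereas a family of walks that keep clear of a moving barrier shows
`2.47 ^ n ≤ σ_n`.
-/

namespace SelfAvoidingWalk

open scoped Finset

section Tauberian

variable {x y : ℕ → ℝ} {c L D : ℝ}

/-- Schmidt's one-sided Tauberian condition: `y` drops by at most `ε` on `[m, (1 + δ) m]`. -/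
def SlowlyDecreasing (y : ℕ → ℝ) : Prop :=
  ∀ ε > 0, ∃ δ > 0, ∀ᶠ m : ℕ in atTop, ∀ k ≥ m, (k : ℝ) ≤ (1 + δ) * m → y m - ε ≤ y k

lemma SlowlyDecreasing.of_sub_div_le (h : ∀ᶠ n : ℕ in atTop, y n - D / n ≤ y (n + 1)) :
    SlowlyDecreasing y := by
  intro ε hε
  refine ⟨ε / (|D| + 1), by positivity, ?_⟩
  obtain ⟨N, hN⟩ := eventually_atTop.1 h
  filter_upwards [eventually_ge_atTop N, eventually_gt_atTop 0] with m hmN hm k hmk hk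
  have : (0 : ℝ) < m := by exact_mod_cast hm
  have drop_le (i : ℕ) : y m - i * (|D| / m) ≤ y (m + i) := by
    induction i with
    | zero => simp
    | succ i ih =>
      have hDi : D / ((m + i : ℕ) : ℝ) ≤ |D| / m := by
        gcongr
        · exact le_abs_self D
        · omega
      have := hN (m + i) (by omega)
      rw [← add_assoc]
      push_cast at *
      linarith
  obtain ⟨i, rfl⟩ := Nat.exists_eq_add_of_le hmk
  have hi : (i : ℝ) ≤ ε / (|D| + 1) * m := by push_cast at hk; linarith
  have : i * (|D| / m) ≤ ε :=
    calc i * (|D| / m) ≤ ε / (|D| + 1) * m * ((|D| + 1) / m) := by gcongr; linarith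
      _ = ε := by field_simp
  linarith [drop_le i]

lemma eventually_abs_sum_window_sub_le
    (hx : Tendsto (fun n : ℕ => (∑ i ∈ Finset.range n, x i) / n) atTop (nhds L))
    {ε δ : ℝ} (hε : 0 < ε) (hδ : 0 < δ) :
    ∀ᶠ n : ℕ in atTop, ∀ k : ℕ, δ * n ≤ k →
      |∑ i ∈ Finset.range k, x (n + i) - k * L| ≤ ε * k := by
  have hη : 0 < ε / (2 / δ + 1) := by positivity
  set η := ε / (2 / δ + 1) with hη_def
  obtain ⟨N, hN⟩ := eventually_atTop.1 (Metric.tendsto_nhds.1 hx η hη)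
  have abs_prefix_le {n : ℕ} (hn : N ≤ n) : |∑ i ∈ Finset.range n, x i - n * L| ≤ η * n := by
    rcases n.eq_zero_or_pos with rfl | hn0
    · simp
    have hn0 : (0 : ℝ) < n := by exact_mod_cast hn0
    have := (hN n hn).le
    rwa [Real.dist_eq, div_sub' hn0.ne', abs_div, abs_of_pos hn0, div_le_iff₀ hn0] at this
  filter_upwards [eventually_ge_atTop N] with n hn k hk
  have h_n := abs_le.1 (abs_prefix_le hn)
  have h_nk := abs_le.1 (abs_prefix_le (hn.trans (n.le_add_right k)))
  rw [Finset.sum_range_add] at h_nk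
  push_cast at h_nk
  have error_le : η * (2 * n + k) ≤ ε * k :=
    calc η * (2 * n + k) ≤ η * (2 * (k / δ) + k) := by
          gcongr
          rwa [le_div_iff₀' hδ]
      _ = ε * k := by rw [hη_def]; field_simp
  rw [abs_le]
  constructor <;> linarith

lemma eventually_max_le_of_slowlyDecreasing (hcL : c < L)
    (hx : Tendsto (fun n : ℕ => (∑ i ∈ Finset.range n, x i) / n) atTop (nhds L))
    (hslow : SlowlyDecreasing fun n => max c (x n)) {ε : ℝ} (hε : 0 < ε) :
    ∀ᶠ n in atTop, max c (x n) ≤ L + ε := by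
  obtain ⟨δ, hδ, hdrop⟩ := hslow (ε / 2) (by positivity)
  filter_upwards [hdrop, eventually_abs_sum_window_sub_le hx (by positivity : 0 < ε / 4) hδ]
    with n hdrop hwindow
  by_contra! hlarge
  have le_x : ∀ i ∈ Finset.range (⌊δ * n⌋₊ + 1), L + ε / 2 ≤ x (n + i) := by
    intro i hi
    have hi : (i : ℝ) ≤ δ * n :=
      (Nat.le_floor_iff (by positivity)).1 (Nat.lt_succ_iff.1 (Finset.mem_range.1 hi))
    have := hdrop (n + i) (n.le_add_right i) (by push_cast; linarith)
    rcases le_max_iff.1 ((by linarith : L + ε / 2 ≤ max c (x n) - ε / 2).trans this) with h | h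
    · linarith
    · exact h
  have sum_ge := Finset.card_nsmul_le_sum _ _ _ le_x
  have sum_le := (abs_le.1 (hwindow (⌊δ * n⌋₊ + 1)
    (by exact_mod_cast (Nat.lt_floor_add_one (δ * n)).le))).2
  rw [Finset.card_range, nsmul_eq_mul] at sum_ge
  have : (0 : ℝ) < (⌊δ * n⌋₊ + 1 : ℕ) := by positivity
  nlinarith

lemma eventually_le_max_of_slowlyDecreasing
    (hx : Tendsto (fun n : ℕ => (∑ i ∈ Finset.range n, x i) / n) atTop (nhds L))
    (hslow : SlowlyDecreasing fun n => max c (x n)) {ε : ℝ} (hε : 0 < ε) :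
    ∀ᶠ n in atTop, L - ε ≤ max c (x n) := by
  obtain ⟨δ, hδ, hdrop⟩ := hslow (ε / 2) (by positivity)
  have hstart : Tendsto (fun n : ℕ => ⌈n / (1 + δ)⌉₊) atTop atTop :=
    tendsto_nat_ceil_atTop.comp (tendsto_natCast_atTop_atTop.atTop_div_const (by positivity))
  obtain ⟨N, hN⟩ := eventually_atTop.1 hdrop
  filter_upwards [hstart.eventually (eventually_ge_atTop N),
    hstart.eventually (eventually_abs_sum_window_sub_le hx (by positivity : 0 < ε / 4)
      (by positivity : 0 < δ / (1 + δ)))] with n hmN hwindow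
  set m := ⌈n / (1 + δ)⌉₊
  by_contra! hsmall
  have hmn : m ≤ n := Nat.ceil_le.2 (div_le_self n.cast_nonneg (by linarith))
  have hnm : (n : ℝ) ≤ (1 + δ) * m := (div_le_iff₀' (by positivity)).1 (Nat.le_ceil _)
  obtain ⟨k, hk⟩ := Nat.exists_eq_add_of_le hmn
  have x_le : ∀ i ∈ Finset.range (k + 1), x (m + i) ≤ L - ε / 2 := by
    intro i hi
    have hi : i ≤ k := Nat.lt_succ_iff.1 (Finset.mem_range.1 hi)
    have := hN (m + i) (by omega) n (by omega) (hnm.trans (by gcongr; omega))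
    linarith [le_max_right c (x (m + i))]
  have window_long : δ / (1 + δ) * m ≤ (k + 1 : ℕ) := by
    have : (m : ℝ) < n / (1 + δ) + 1 := Nat.ceil_lt_add_one (by positivity)
    rw [div_add_one (by positivity), lt_div_iff₀ (by positivity), hk] at this
    rw [div_mul_eq_mul_div, div_le_iff₀ (by positivity)]
    push_cast at *
    nlinarith
  have sum_le := Finset.sum_le_card_nsmul _ _ _ x_le
  have sum_ge := (abs_le.1 (hwindow (k + 1) window_long)).1
  rw [Finset.card_range, nsmul_eq_mul] at sum_le
  have : (0 : ℝ) < (k + 1 : ℕ) := by positivity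
  nlinarith

theorem tendsto_of_cesaro_of_slowlyDecreasing_max (hcL : c < L)
    (hx : Tendsto (fun n : ℕ => (∑ i ∈ Finset.range n, x i) / n) atTop (nhds L))
    (hslow : SlowlyDecreasing fun n => max c (x n)) : Tendsto x atTop (nhds L) := by
  refine Metric.tendsto_nhds.2 fun ε hε => ?_
  have hη : 0 < min (ε / 2) ((L - c) / 2) := by have := sub_pos.2 hcL; positivity
  filter_upwards [eventually_max_le_of_slowlyDecreasing hcL hx hslow hη,
    eventually_le_max_of_slowlyDecreasing hx hslow hη] with n hupper hlower
  have hε' := min_le_left (ε / 2) ((L - c) / 2)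
  have hc' := min_le_right (ε / 2) ((L - c) / 2)
  have hmax : max c (x n) = x n := max_eq_right (le_of_not_ge fun h => by
    rw [max_eq_left h] at hlower
    linarith)
  rw [hmax] at hupper hlower
  rw [Real.dist_eq, abs_lt]
  constructor <;> linarith

end Tauberian

section Ratio

lemma tendsto_const_mul_add_atTop {p : ℕ} (hp : 0 < p) (r : ℕ) :
    Tendsto (fun k => p * k + r) atTop atTop :=
  tendsto_atTop_mono (fun k => (Nat.le_mul_of_pos_left k hp).trans (Nat.le_add_right _ r))
    tendsto_id

lemma tendsto_of_forall_residue {α : Type*} {f : ℕ → α} {l : Filter α} {p : ℕ} (hp : 0 < p)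
    (h : ∀ r < p, Tendsto (fun k => f (p * k + r)) atTop l) : Tendsto f atTop l := by
  intro s hs
  have hall : ∀ᶠ k in atTop, ∀ r ∈ Finset.range p, f (p * k + r) ∈ s :=
    (eventually_all_finset _).2 fun r hr => h r (Finset.mem_range.1 hr) hs
  refine mem_map.2 ?_
  filter_upwards [(Nat.tendsto_div_const_atTop hp.ne').eventually hall] with n hn
  simpa only [Set.mem_preimage, Nat.div_add_mod] using hn (n % p) (Finset.mem_range.2 (n.mod_lt hp))

lemma posLog_sub_le_posLog {s t E : ℝ} (hs : 0 ≤ s) (ht : 0 ≤ t) (hE : 0 ≤ E) (hst : s - E ≤ t) :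
    s.posLog - E ≤ t.posLog := by
  rw [Real.posLog_eq_log_max_one hs, Real.posLog_eq_log_max_one ht, sub_le_iff_le_add']
  have hs1 : 0 < max 1 s := by positivity
  have ht1 : 0 < max 1 t := by positivity
  have hmax : max 1 s ≤ max 1 t + E :=
    max_le (by linarith [le_max_left 1 t]) (by linarith [le_max_right 1 t])
  rw [← sub_le_iff_le_add, ← Real.log_div hs1.ne' ht1.ne']
  calc Real.log (max 1 s / max 1 t) ≤ max 1 s / max 1 t - 1 :=
        Real.log_le_sub_one_of_pos (by positivity)
    _ ≤ E := by
        rw [div_sub_one ht1.ne', div_le_iff₀ ht1]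
        nlinarith [le_max_left 1 t]

variable {a : ℕ → ℝ} {μ D : ℝ} {p : ℕ}

lemma tendsto_cesaro_log_ratio (ha : ∀ n, 0 < a n) (hμ : 0 < μ)
    (hroot : Tendsto (fun n : ℕ => a n ^ ((1 : ℝ) / n)) atTop (nhds μ)) (hp : 0 < p) (r : ℕ) :
    Tendsto (fun n : ℕ => (∑ k ∈ Finset.range n,
      Real.log (a (p * k + r + p) / a (p * k + r))) / n) atTop (nhds (p * Real.log μ)) := by
  have hlog : Tendsto (fun n : ℕ => Real.log (a n) / n) atTop (nhds (Real.log μ)) :=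
    ((Real.continuousAt_log hμ.ne').tendsto.comp hroot).congr fun n => by
      rw [Function.comp_apply, Real.log_rpow (ha n), one_div_mul_eq_div]
  have hindex := tendsto_const_mul_add_atTop hp r
  have hslope : Tendsto (fun n : ℕ => ((p * n + r : ℕ) : ℝ) / n) atTop (nhds p) := by
    have := (tendsto_const_div_atTop_nhds_zero_nat (r : ℝ)).const_add (p : ℝ)
    rw [add_zero] at this
    refine this.congr' ?_
    filter_upwards [eventually_gt_atTop 0] with n hn
    have : (n : ℝ) ≠ 0 := by exact_mod_cast hn.ne'
    push_cast
    field_simp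
  have hmain := ((hlog.comp hindex).mul hslope).sub
    (tendsto_const_div_atTop_nhds_zero_nat (Real.log (a r)))
  rw [sub_zero, mul_comm] at hmain
  refine hmain.congr' ?_
  filter_upwards [eventually_gt_atTop 0] with n hn
  have : ((p * n + r : ℕ) : ℝ) ≠ 0 := by
    exact_mod_cast (Nat.add_pos_left (Nat.mul_pos hp hn) r).ne'
  have htelescope := Finset.sum_range_sub (fun k => Real.log (a (p * k + r))) n
  simp only [mul_zero, zero_add, mul_add_one] at htelescope
  have hterm (k : ℕ) : Real.log (a (p * k + r + p) / a (p * k + r)) =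
      Real.log (a (p * k + p + r)) - Real.log (a (p * k + r)) := by
    rw [Real.log_div (ha _).ne' (ha _).ne', add_right_comm]
  simp only [hterm, htelescope, Function.comp_apply]
  field_simp

/- The hypothesis bounds the drop of `log (a (n + p) / a n)` from `n` to `n + p` only where this
logarithm is nonnegative, whence the use of `posLog`. -/
theorem tendsto_ratio_of_sq_ratio_sub_div_le (ha : ∀ n, 0 < a n) (hμ : 1 < μ)
    (hroot : Tendsto (fun n : ℕ => a n ^ ((1 : ℝ) / n)) atTop (nhds μ)) (hp : 0 < p)
    (hsq : ∀ᶠ n : ℕ in atTop, (a (n + p) / a n) ^ 2 - D / n ≤ a (n + 2 * p) / a n) :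
    Tendsto (fun n => a (n + p) / a n) atTop (nhds (μ ^ p)) := by
  set φ : ℕ → ℝ := fun n => a (n + p) / a n with hφ
  have hφ_pos (n : ℕ) : 0 < φ n := div_pos (ha _) (ha _)
  have posLog_step : ∀ᶠ n : ℕ in atTop, (φ n).posLog - |D| / n ≤ (φ (n + p)).posLog := by
    filter_upwards [hsq] with n hn
    have hmul : φ n * φ (n + p) = a (n + 2 * p) / a n := by
      rw [hφ, div_mul_div_comm, mul_comm, two_mul, ← add_assoc]
      exact mul_div_mul_right _ _ (ha _).ne'
    rcases le_total (φ n) 1 with h1 | h1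
    · rw [(Real.posLog_eq_zero_iff _).2 (by rwa [abs_of_pos (hφ_pos n)])]
      have : 0 ≤ |D| / n := by positivity
      linarith [Real.posLog_nonneg (x := φ (n + p))]
    · refine posLog_sub_le_posLog (hφ_pos _).le (hφ_pos _).le (by positivity) ?_
      have hD : D / n ≤ |D| / n := by gcongr; exact le_abs_self D
      have : 0 ≤ |D| / n := by positivity
      nlinarith
  have hlog : Tendsto (fun n => Real.log (φ n)) atTop (nhds (p * Real.log μ)) := by
    refine tendsto_of_forall_residue hp fun r _ => ?_
    refine tendsto_of_cesaro_of_slowlyDecreasing_max (c := 0)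
      (by have := Real.log_pos hμ; positivity)
      (tendsto_cesaro_log_ratio ha (zero_lt_one.trans hμ) hroot hp r)
      (SlowlyDecreasing.of_sub_div_le (D := |D|) ?_)
    filter_upwards [(tendsto_const_mul_add_atTop hp r).eventually posLog_step,
      eventually_gt_atTop 0] with k hk hk0
    have : |D| / (p * k + r : ℕ) ≤ |D| / k := by
      gcongr
      nlinarith
    rw [show p * (k + 1) + r = p * k + r + p by ring]
    simp only [Real.posLog_apply] at hk
    linarith
  have hexp := (Real.continuous_exp.tendsto _).comp hlog
  rw [Real.exp_nat_mul, Real.exp_log (zero_lt_one.trans hμ)] at hexp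
  exact hexp.congr fun n => Real.exp_log (hφ_pos n)

end Ratio

section Sequences

variable {V : Type*} {G : SimpleGraph V} {v : V} {n : ℕ} {w : ℕ → V}

/-- `w` lists the vertices of an `n`-step self-avoiding walk from `v`. The sequence stays at the
last vertex after time `n`, so that a walk is determined by its sequence and walks of all lengths
live in the same type. -/
structure IsSAW (G : SimpleGraph V) (v : V) (n : ℕ) (w : ℕ → V) : Prop where
  start : w 0 = v
  adj : ∀ t < n, G.Adj (w t) (w (t + 1))
  injOn : Set.InjOn w (Set.Iic n)
  const : ∀ t ≥ n, w t = w n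

lemma IsSAW.ne (hw : IsSAW G v n w) {s t : ℕ} (hs : s ≤ n) (ht : t ≤ n) (hst : s ≠ t) :
    w s ≠ w t :=
  fun h => hst (hw.injOn hs ht h)

lemma isSAW_getVert {u : V} {p : G.Walk v u} (hp : p.IsPath) : IsSAW G v p.length p.getVert where
  start := p.getVert_zero
  adj _ ht := p.adj_getVert_succ ht
  injOn := hp.getVert_injOn
  const _ ht := by rw [p.getVert_of_length_le ht, p.getVert_length]

lemma exists_walk_getVert_eq (w : ℕ → V) (hadj : ∀ t < n, G.Adj (w t) (w (t + 1))) :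
    ∃ p : G.Walk (w 0) (w n), p.length = n ∧ ∀ t ≤ n, p.getVert t = w t := by
  induction n generalizing w with
  | zero => exact ⟨.nil, rfl, fun t ht => by rw [Nat.le_zero.1 ht]; rfl⟩
  | succ n ih =>
    obtain ⟨p, hlen, hp⟩ := ih (fun t => w (t + 1)) fun t ht => hadj (t + 1) (by omega)
    refine ⟨.cons (hadj 0 n.succ_pos) p, by rw [SimpleGraph.Walk.length_cons, hlen], fun t ht => ?_⟩
    cases t with
    | zero => exact SimpleGraph.Walk.getVert_zero _
    | succ t => simpa using hp t (by omega)

lemma IsSAW.exists_path (hw : IsSAW G v n w) :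
    ∃ p : G.Walk v (w n), p.IsPath ∧ p.length = n ∧ p.getVert = w := by
  obtain ⟨rfl, hadj, hinj, hconst⟩ := hw
  obtain ⟨p, hlen, hp⟩ := exists_walk_getVert_eq w hadj
  refine ⟨p, ?_, hlen, funext fun t => ?_⟩
  · rw [← SimpleGraph.Walk.IsPath.getVert_injOn_iff, hlen]
    exact hinj.congr fun t ht => (hp t ht).symm
  · rcases le_total t n with ht | ht
    · exact hp t ht
    · rw [hconst t ht, p.getVert_of_length_le (hlen.trans_le ht)]

variable (G v n) in
lemma sawCount_eq_card : sawCount G v n = Nat.card {w : ℕ → V // IsSAW G v n w} := by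
  refine Nat.card_congr (Equiv.ofBijective
    (fun p => ⟨p.1.2.getVert, by simpa only [p.2.2] using isSAW_getVert p.2.1⟩) ⟨?_, ?_⟩)
  · rintro ⟨⟨u, p⟩, hp, rfl⟩ ⟨⟨u', p'⟩, hp', hlen⟩ h
    have hvert : p.getVert = p'.getVert := congrArg Subtype.val h
    obtain rfl : u = u' := by
      rw [← p.getVert_length, ← p'.getVert_length, hvert]
      exact congrArg p'.getVert hlen.symm
    obtain rfl : p = p' := SimpleGraph.Walk.ext_getVert (congrFun hvert)
    rfl
  · rintro ⟨w, hw⟩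
    obtain ⟨p, hpath, hlen, hp⟩ := hw.exists_path
    exact ⟨⟨⟨w n, p⟩, hpath, hlen⟩, Subtype.ext hp⟩

/-- The sequence following `w` up to time `n` and sitting at `x` afterwards. -/
def extend (n : ℕ) (w : ℕ → V) (x : V) (t : ℕ) : V := if t ≤ n then w t else x

/-- The sequence following `w` up to time `n` and stopping there. -/
def truncate (n : ℕ) (w : ℕ → V) (t : ℕ) : V := w (min t n)

lemma extend_of_le (x : V) {t : ℕ} (h : t ≤ n) : extend n w x t = w t := if_pos h

lemma extend_of_lt (x : V) {t : ℕ} (h : n < t) : extend n w x t = x := if_neg h.not_ge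

lemma IsSAW.truncate (hw : IsSAW G v (n + 1) w) : IsSAW G v n (truncate n w) where
  start := hw.start
  adj t ht := by
    simpa only [SelfAvoidingWalk.truncate, min_eq_left ht.le, min_eq_left (Nat.succ_le_of_lt ht)]
      using hw.adj t (by omega)
  injOn s hs t ht h := by
    simp only [SelfAvoidingWalk.truncate, min_eq_left (Set.mem_Iic.1 hs),
      min_eq_left (Set.mem_Iic.1 ht)] at h
    exact hw.injOn (Nat.le_succ_of_le hs) (Nat.le_succ_of_le ht) h
  const t ht := by simp only [SelfAvoidingWalk.truncate, min_eq_right ht, min_self]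

lemma IsSAW.extend_truncate (hw : IsSAW G v (n + 1) w) :
    extend n (SelfAvoidingWalk.truncate n w) (w (n + 1)) = w := by
  funext t
  rcases le_or_gt t n with ht | ht
  · rw [extend_of_le _ ht, SelfAvoidingWalk.truncate, min_eq_left ht]
  · rw [extend_of_lt _ ht, hw.const t ht]

lemma IsSAW.truncate_extend (hw : IsSAW G v n w) (x : V) :
    SelfAvoidingWalk.truncate n (extend n w x) = w := by
  funext t
  rw [SelfAvoidingWalk.truncate, extend_of_le x (min_le_right t n)]
  rcases le_total t n with ht | ht
  · rw [min_eq_left ht]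
  · rw [min_eq_right ht, hw.const t ht]

lemma IsSAW.extend (hw : IsSAW G v n w) {x : V} (hadj : G.Adj (w n) x)
    (hnew : ∀ t ≤ n, w t ≠ x) : IsSAW G v (n + 1) (extend n w x) where
  start := by rw [extend_of_le x n.zero_le, hw.start]
  adj t ht := by
    rcases Nat.lt_succ_iff_lt_or_eq.1 ht with ht | rfl
    · rw [extend_of_le x ht.le, extend_of_le x ht]
      exact hw.adj t ht
    · rwa [extend_of_le x le_rfl, extend_of_lt x t.lt_succ_self]
  injOn s hs t ht h := by
    rcases Nat.le_succ_iff.1 hs with hs | rfl <;> rcases Nat.le_succ_iff.1 ht with ht | rfl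
    · rw [extend_of_le x hs, extend_of_le x ht] at h
      exact hw.injOn hs ht h
    · rw [extend_of_le x hs, extend_of_lt x n.lt_succ_self] at h
      exact absurd h (hnew s hs)
    · rw [extend_of_lt x n.lt_succ_self, extend_of_le x ht] at h
      exact absurd h.symm (hnew t ht)
    · rfl
  const t ht := by rw [extend_of_lt x ht, extend_of_lt x n.lt_succ_self]

lemma isSAW_zero_iff : IsSAW G v 0 w ↔ w = fun _ => v := by
  constructor
  · exact fun hw => funext fun t => (hw.const t t.zero_le).trans hw.start
  · rintro rfl
    exact ⟨rfl, fun _ h => absurd h (Nat.not_lt_zero _),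
      fun s hs t ht _ => (Nat.le_zero.1 hs).trans (Nat.le_zero.1 ht).symm, fun _ _ => rfl⟩

end Sequences

section Counting

variable {V : Type*} {G : SimpleGraph V} [G.LocallyFinite] {v : V} {n : ℕ} {w : ℕ → V}

variable (G v n) in
lemma finite_setOf_isSAW : {w | IsSAW G v n w}.Finite := by
  induction n with
  | zero => exact (Set.finite_singleton fun _ => v).subset fun w hw => isSAW_zero_iff.1 hw
  | succ n ih =>
    refine (ih.biUnion fun w _ =>
      (G.neighborFinset (w n)).finite_toSet.image (extend n w)).subset fun w hw => ?_
    refine Set.mem_biUnion hw.truncate ⟨w (n + 1), ?_, hw.extend_truncate⟩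
    rw [truncate, min_self, Finset.mem_coe, SimpleGraph.mem_neighborFinset]
    exact hw.adj n n.lt_succ_self

variable (G v n) in
/-- The finite set of `n`-step self-avoiding walks from `v`. -/
noncomputable def saws : Finset (ℕ → V) := (finite_setOf_isSAW G v n).toFinset

lemma mem_saws : w ∈ saws G v n ↔ IsSAW G v n w := Set.Finite.mem_toFinset _

variable (G v n) in
lemma card_saws : #(saws G v n) = sawCount G v n := by
  rw [sawCount_eq_card, saws, ← Set.ncard_eq_toFinset_card _ (finite_setOf_isSAW G v n)]
  rfl

lemma sum_saws_succ [DecidableEq V] {M : Type*} [AddCommMonoid M] (f : (ℕ → V) → M) :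
    ∑ w ∈ saws G v (n + 1), f w =
      ∑ w ∈ saws G v n, ∑ x ∈ G.neighborFinset (w n) with ∀ t ≤ n, w t ≠ x, f (extend n w x) := by
  rw [Finset.sum_sigma']
  symm
  refine Finset.sum_bij' (fun e _ => extend n e.1 e.2) (fun w _ => ⟨truncate n w, w (n + 1)⟩)
    ?_ ?_ ?_ ?_ fun _ _ => rfl
  · simp only [Finset.mem_sigma, Finset.mem_filter, SimpleGraph.mem_neighborFinset, mem_saws]
    exact fun e ⟨hw, hadj, hnew⟩ => hw.extend hadj hnew
  · simp only [Finset.mem_sigma, Finset.mem_filter, SimpleGraph.mem_neighborFinset, mem_saws]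
    refine fun w hw => ⟨hw.truncate, ?_, fun t ht => ?_⟩
    · simpa [truncate] using hw.adj n n.lt_succ_self
    · rw [truncate, min_eq_left ht]
      exact hw.ne (by omega) le_rfl (by omega)
  · simp only [Finset.mem_sigma, mem_saws]
    rintro ⟨w, x⟩ ⟨hw, -⟩
    exact Sigma.ext (hw.truncate_extend x) (heq_of_eq (extend_of_lt x n.lt_succ_self))
  · exact fun w hw => (mem_saws.1 hw).extend_truncate

variable (G v n) in
lemma sawCount_succ_le {Δ : ℕ} (hΔ : ∀ u, G.degree u ≤ Δ) :
    sawCount G v (n + 1) ≤ sawCount G v n * Δ := by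
  classical
  rw [← card_saws, ← card_saws, Finset.card_eq_sum_ones, sum_saws_succ]
  refine Finset.sum_le_card_nsmul _ _ _ fun w _ => ?_
  rw [← Finset.card_eq_sum_ones]
  exact (Finset.card_filter_le _ _).trans (hΔ _)

lemma sawCount_pos_of_tendsto_root {Δ : ℕ} (hΔ : ∀ u, G.degree u ≤ Δ) {μ : ℝ} (hμ : 1 < μ)
    (hroot : Tendsto (fun n : ℕ => (sawCount G v n : ℝ) ^ ((1 : ℝ) / n)) atTop (nhds μ)) (n : ℕ) :
    0 < sawCount G v n := by
  by_contra! h0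
  have hzero (m : ℕ) (hm : n ≤ m) : sawCount G v m = 0 := by
    induction m, hm using Nat.le_induction with
    | base => exact Nat.le_zero.1 h0
    | succ m _ ih => simpa [ih] using sawCount_succ_le G v m hΔ
  obtain ⟨m, hm, hmn, hm0⟩ := ((hroot.eventually (lt_mem_nhds hμ)).and
    ((eventually_ge_atTop n).and (eventually_gt_atTop 0))).exists
  rw [hzero m hmn, Nat.cast_zero, Real.zero_rpow (by positivity)] at hm
  linarith

end Counting

section InsertPair

variable {V : Type*} {G : SimpleGraph V} {v a b : V} {n k : ℕ} {w : ℕ → V}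

/-- The increasing enumeration of the times other than `k + 1` and `k + 2`. -/
def skip (k s : ℕ) : ℕ := if s ≤ k then s else s + 2

lemma skip_of_le {s : ℕ} (h : s ≤ k) : skip k s = s := if_pos h

lemma skip_of_lt {s : ℕ} (h : k < s) : skip k s = s + 2 := if_neg h.not_ge

lemma eq_or_eq_or_eq_skip (k t : ℕ) : t = k + 1 ∨ t = k + 2 ∨ ∃ s, t = skip k s := by
  rcases le_or_gt t k with h | h
  · exact .inr (.inr ⟨t, (skip_of_le h).symm⟩)
  · by_cases h2 : t ≤ k + 2
    · omega
    · exact .inr (.inr ⟨t - 2, by rw [skip_of_lt (by omega)]; omega⟩)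

/-- Removes the vertices visited at times `k + 1` and `k + 2`. -/
def deletePair (w : ℕ → V) (k : ℕ) (s : ℕ) : V := w (skip k s)

/-- `⟨k, a, b⟩` encodes the insertion of the vertices `a`, `b` right after time `k`. -/
abbrev Insertion (V : Type*) : Type _ := Σ _ : ℕ, V × V

/-- Visits `a` and `b` between times `k` and `k + 1` of `w`, where `e = ⟨k, a, b⟩`. -/
def insertPair (w : ℕ → V) (e : Insertion V) (t : ℕ) : V :=
  if t ≤ e.1 then w t else if t = e.1 + 1 then e.2.1 else if t = e.1 + 2 then e.2.2 else w (t - 2)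

lemma insertPair_add_one (e : Insertion V) : insertPair w e (e.1 + 1) = e.2.1 := by
  simp [insertPair]

lemma insertPair_add_two (e : Insertion V) : insertPair w e (e.1 + 2) = e.2.2 := by
  simp [insertPair]

lemma insertPair_skip (e : Insertion V) (s : ℕ) : insertPair w e (skip e.1 s) = w s := by
  unfold insertPair skip
  grind

lemma insertPair_of_le (e : Insertion V) {t : ℕ} (h : t ≤ e.1) : insertPair w e t = w t := by
  simpa only [skip_of_le h] using insertPair_skip (w := w) e t

lemma insertPair_of_lt (e : Insertion V) {t : ℕ} (h : e.1 < t) :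
    insertPair w e (t + 2) = w t := by
  simpa only [skip_of_lt h] using insertPair_skip (w := w) e t

lemma deletePair_insertPair (w : ℕ → V) (e : Insertion V) :
    deletePair (insertPair w e) e.1 = w :=
  funext (insertPair_skip e)

lemma insertPair_deletePair (w : ℕ → V) (k : ℕ) :
    insertPair (deletePair w k) ⟨k, w (k + 1), w (k + 2)⟩ = w := by
  funext t
  rcases eq_or_eq_or_eq_skip k t with rfl | rfl | ⟨s, rfl⟩
  · exact insertPair_add_one _
  · exact insertPair_add_two _
  · exact insertPair_skip _ s

lemma skip_injective (k : ℕ) : Function.Injective (skip k) := by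
  intro s t h
  unfold skip at h
  grind

lemma skip_le_add_two_iff (hk : k < n) {s : ℕ} : skip k s ≤ n + 2 ↔ s ≤ n := by
  unfold skip
  grind

lemma IsSAW.deletePair (hw : IsSAW G v (n + 2) w) (hk : k < n) (hadj : G.Adj (w k) (w (k + 3))) :
    IsSAW G v n (deletePair w k) where
  start := (congrArg w (skip_of_le k.zero_le)).trans hw.start
  adj t ht := by
    unfold SelfAvoidingWalk.deletePair
    rcases lt_trichotomy t k with h | rfl | h
    · rw [skip_of_le h.le, skip_of_le h]
      exact hw.adj t (by omega)
    · rwa [skip_of_le le_rfl, skip_of_lt t.lt_succ_self]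
    · rw [skip_of_lt h, skip_of_lt (by omega), Nat.succ_add]
      exact hw.adj (t + 2) (by omega)
  injOn _ hs _ ht h := skip_injective k
    (hw.injOn ((skip_le_add_two_iff hk).2 hs) ((skip_le_add_two_iff hk).2 ht) h)
  const t ht := by
    unfold SelfAvoidingWalk.deletePair
    rw [skip_of_lt (hk.trans_le ht), skip_of_lt hk]
    exact hw.const _ (by omega)

lemma IsSAW.insertPair (hw : IsSAW G v n w) {e : Insertion V} (hk : e.1 < n)
    (h₁ : G.Adj (w e.1) e.2.1) (h₂ : G.Adj e.2.1 e.2.2) (h₃ : G.Adj e.2.2 (w (e.1 + 1)))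
    (hnew : ∀ t ≤ n, w t ≠ e.2.1 ∧ w t ≠ e.2.2) : IsSAW G v (n + 2) (insertPair w e) where
  start := (insertPair_of_le e e.1.zero_le).trans hw.start
  adj t ht := by
    rcases eq_or_eq_or_eq_skip e.1 t with rfl | rfl | ⟨s, rfl⟩
    · rwa [insertPair_add_one, insertPair_add_two]
    · rwa [insertPair_add_two, insertPair_of_lt e e.1.lt_succ_self]
    rw [insertPair_skip]
    rcases lt_trichotomy s e.1 with h | rfl | h
    · rw [skip_of_le h.le, insertPair_of_le e h]
      exact hw.adj s (by omega)
    · rwa [skip_of_le le_rfl, insertPair_add_one]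
    · rw [skip_of_lt h] at ht ⊢
      rw [add_right_comm, insertPair_of_lt e (by omega)]
      exact hw.adj s (by omega)
  injOn s hs t ht h := by
    rcases eq_or_eq_or_eq_skip e.1 s with rfl | rfl | ⟨s, rfl⟩ <;>
      rcases eq_or_eq_or_eq_skip e.1 t with rfl | rfl | ⟨t, rfl⟩ <;>
      simp only [Set.mem_Iic, skip_le_add_two_iff hk] at hs ht <;>
      simp only [insertPair_add_one, insertPair_add_two, insertPair_skip] at h
    · rfl
    · exact absurd h h₂.ne
    · exact absurd h.symm (hnew t ht).1
    · exact absurd h.symm h₂.ne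
    · rfl
    · exact absurd h.symm (hnew t ht).2
    · exact absurd h (hnew s hs).1
    · exact absurd h (hnew s hs).2
    · rw [hw.injOn hs ht h]
  const t ht := by
    obtain ⟨s, rfl⟩ := Nat.exists_eq_add_of_le' ((Nat.le_add_left 2 n).trans ht)
    rw [insertPair_of_lt e (by omega), insertPair_of_lt e hk]
    exact hw.const s (by omega)

lemma isSAW_insertPair_iff (hw : IsSAW G v n w) {e : Insertion V} (hk : e.1 < n) :
    IsSAW G v (n + 2) (insertPair w e) ↔
      G.Adj (w e.1) e.2.1 ∧ G.Adj e.2.1 e.2.2 ∧ G.Adj e.2.2 (w (e.1 + 1)) ∧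
        ∀ t ≤ n, w t ≠ e.2.1 ∧ w t ≠ e.2.2 := by
  refine ⟨fun h => ⟨?_, ?_, ?_, fun t ht => ?_⟩,
    fun ⟨h₁, h₂, h₃, hnew⟩ => hw.insertPair hk h₁ h₂ h₃ hnew⟩
  · simpa only [insertPair_of_le e le_rfl, insertPair_add_one] using h.adj e.1 (by omega)
  · simpa only [insertPair_add_one, insertPair_add_two] using h.adj (e.1 + 1) (by omega)
  · simpa only [insertPair_add_two, insertPair_of_lt e e.1.lt_succ_self]
      using h.adj (e.1 + 2) (by omega)
  · have hskip := (skip_le_add_two_iff hk).2 ht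
    constructor
    · simpa only [insertPair_skip, insertPair_add_one] using
        h.ne (t := e.1 + 1) hskip (by omega) (by unfold skip; grind)
    · simpa only [insertPair_skip, insertPair_add_two] using
        h.ne (t := e.1 + 2) hskip (by omega) (by unfold skip; grind)

end InsertPair

section UTurns

variable {V : Type*} {G : SimpleGraph V} {v : V} {n k t : ℕ} {w : ℕ → V}

open Classical in
/-- The times `t` at which the `n`-step walk `w` makes a U-turn: its vertices at times `t` and
`t + 3` are neighbours. -/
noncomputable def uTurns (G : SimpleGraph V) (n : ℕ) (w : ℕ → V) : Finset ℕ :=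
  {t ∈ Finset.range (n - 2) | G.Adj (w t) (w (t + 3))}

lemma mem_uTurns : t ∈ uTurns G n w ↔ t + 3 ≤ n ∧ G.Adj (w t) (w (t + 3)) := by
  simp only [uTurns, Finset.mem_filter, Finset.mem_range]
  refine and_congr_left fun _ => ?_
  omega

lemma skip_mem_uTurns_iff (hk : k < n) (ht : t + 3 ≤ k ∨ k < t) :
    skip k t ∈ uTurns G (n + 2) w ↔ t ∈ uTurns G n (deletePair w k) := by
  rw [mem_uTurns, mem_uTurns, deletePair, deletePair]
  rcases ht with ht | ht
  · rw [skip_of_le (by omega), skip_of_le ht]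
    exact and_congr_left fun _ => by omega
  · rw [skip_of_lt ht, skip_of_lt (by omega), add_right_comm]
    exact and_congr_left fun _ => by omega

lemma card_uTurns_deletePair_le (hk : k < n) (w : ℕ → V) :
    #(uTurns G n (deletePair w k)) ≤ #(uTurns G (n + 2) w) + 3 := by
  have hsub : uTurns G n (deletePair w k) ⊆
      {t ∈ uTurns G n (deletePair w k) | t + 3 ≤ k ∨ k < t} ∪ {k - 2, k - 1, k} := by
    intro t ht
    simp only [Finset.mem_union, Finset.mem_filter, Finset.mem_insert, Finset.mem_singleton, ht,
      true_and]
    omega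
  have hcard := (Finset.card_le_card hsub).trans (Finset.card_union_le _ _)
  have hkept : #{t ∈ uTurns G n (deletePair w k) | t + 3 ≤ k ∨ k < t} ≤ #(uTurns G (n + 2) w) :=
    Finset.card_le_card_of_injOn (skip k)
      (fun t ht => by
        obtain ⟨ht, htk⟩ := Finset.mem_filter.1 ht
        exact (skip_mem_uTurns_iff hk htk).2 ht)
      (skip_injective k).injOn
  have := Finset.card_le_three (a := k - 2) (b := k - 1) (c := k)
  omega

lemma card_uTurns_le_deletePair (hk : k < n) (w : ℕ → V) :
    #(uTurns G (n + 2) w) ≤ #(uTurns G n (deletePair w k)) + 5 := by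
  have hsub : uTurns G (n + 2) w ⊆ (uTurns G n (deletePair w k)).image (skip k) ∪
      {k - 2, k - 1, k, k + 1, k + 2} := by
    intro t ht
    rw [Finset.mem_union, Finset.mem_image, or_iff_not_imp_right]
    intro hfar
    simp only [Finset.mem_insert, Finset.mem_singleton, not_or] at hfar
    obtain ⟨s, rfl⟩ : ∃ s, t = skip k s := by
      have := eq_or_eq_or_eq_skip k t
      tauto
    refine ⟨s, (skip_mem_uTurns_iff hk ?_).1 ht, rfl⟩
    unfold skip at hfar
    split_ifs at hfar <;> omega
  have hcard := (Finset.card_le_card hsub).trans (Finset.card_union_le _ _)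
  have himage := Finset.card_image_le (s := uTurns G n (deletePair w k)) (f := skip k)
  have := Finset.card_le_five (a := k - 2) (b := k - 1) (c := k) (d := k + 1) (e := k + 2)
  omega

lemma two_mul_sum_card_filter_lt_le (s : Finset ℕ) :
    2 * ∑ x ∈ s, #{y ∈ s | x < y} ≤ #s ^ 2 := by
  have hswap : ∑ x ∈ s, #{y ∈ s | x < y} = ∑ x ∈ s, #{y ∈ s | y < x} := by
    simp only [Finset.card_filter]
    exact Finset.sum_comm
  calc 2 * ∑ x ∈ s, #{y ∈ s | x < y}
      = ∑ x ∈ s, (#{y ∈ s | x < y} + #{y ∈ s | y < x}) := by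
        rw [Finset.sum_add_distrib, ← hswap, two_mul]
    _ ≤ ∑ _x ∈ s, #s := Finset.sum_le_sum fun x _ => by
        rw [← Finset.card_union_of_disjoint
          (Finset.disjoint_filter.2 fun y _ h => h.not_gt)]
        exact Finset.card_le_card
          (Finset.union_subset (Finset.filter_subset _ _) (Finset.filter_subset _ _))
    _ = #s ^ 2 := by rw [Finset.sum_const, smul_eq_mul, sq]

lemma two_mul_sum_card_later_uTurns_le (w : ℕ → V) :
    2 * ∑ k ∈ uTurns G (n + 2) w, #{l ∈ uTurns G n (deletePair w k) | k < l} ≤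
      #(uTurns G (n + 2) w) ^ 2 := by
  refine (Nat.mul_le_mul_left 2 (Finset.sum_le_sum fun k hk => ?_)).trans
    (two_mul_sum_card_filter_lt_le _)
  have hkn : k < n := by have := (mem_uTurns.1 hk).1; omega
  refine Finset.card_le_card_of_injOn (skip k) (fun l hl => ?_) (skip_injective k).injOn
  obtain ⟨hl, hkl⟩ := Finset.mem_filter.1 hl
  refine Finset.mem_filter.2 ⟨(skip_mem_uTurns_iff hkn (.inr hkl)).2 hl, ?_⟩
  rw [skip_of_lt hkl]
  omega

end UTurns

section DoubleCounting

variable {V : Type*} {G : SimpleGraph V} [G.LocallyFinite] {v : V} {n : ℕ} {w : ℕ → V}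

open Classical in
/-- The insertions that turn the `n`-step walk `w` into a self-avoiding walk with `n + 2` steps. -/
noncomputable def insertions (G : SimpleGraph V) [G.LocallyFinite] (v : V) (n : ℕ) (w : ℕ → V) :
    Finset (Insertion V) :=
  (Finset.range n).sigma fun k =>
    {x ∈ G.neighborFinset (w k) ×ˢ G.neighborFinset (w (k + 1)) |
      IsSAW G v (n + 2) (insertPair w ⟨k, x⟩)}

lemma mem_insertions (hw : IsSAW G v n w) {e : Insertion V} :
    e ∈ insertions G v n w ↔ e.1 < n ∧ IsSAW G v (n + 2) (insertPair w e) := by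
  simp only [insertions, Finset.mem_sigma, Finset.mem_range, Finset.mem_filter,
    Finset.mem_product, SimpleGraph.mem_neighborFinset]
  refine and_congr_right fun hk => and_iff_right_of_imp fun h => ?_
  obtain ⟨h₁, -, h₃, -⟩ := (isSAW_insertPair_iff hw hk).1 h
  exact ⟨h₁, h₃.symm⟩

lemma card_insertions_le {Δ : ℕ} (hΔ : ∀ u, G.degree u ≤ Δ) (w : ℕ → V) :
    #(insertions G v n w) ≤ n * Δ ^ 2 := by
  classical
  rw [insertions, Finset.card_sigma]
  refine (Finset.sum_le_card_nsmul _ _ (Δ ^ 2) fun k _ => ?_).trans_eq (by simp)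
  refine (Finset.card_filter_le _ _).trans ?_
  rw [Finset.card_product, sq]
  exact Nat.mul_le_mul (hΔ _) (hΔ _)

lemma mem_uTurns_insertPair {e : Insertion V} (hw : IsSAW G v n w) (he : e ∈ insertions G v n w) :
    e.1 ∈ uTurns G (n + 2) (insertPair w e) := by
  have hk := ((mem_insertions hw).1 he).1
  rw [mem_uTurns, insertPair_of_le e le_rfl, insertPair_of_lt e e.1.lt_succ_self]
  exact ⟨by omega, hw.adj e.1 hk⟩

lemma deletePair_mem_saws {w : ℕ → V} {k : ℕ} (hw : w ∈ saws G v (n + 2))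
    (hk : k ∈ uTurns G (n + 2) w) :
    deletePair w k ∈ saws G v n ∧
      ⟨k, w (k + 1), w (k + 2)⟩ ∈ insertions G v n (deletePair w k) := by
  obtain ⟨hkn, hadj⟩ := mem_uTurns.1 hk
  have hdel := (mem_saws.1 hw).deletePair (by omega) hadj
  refine ⟨mem_saws.2 hdel, (mem_insertions hdel).2 ⟨by dsimp only; omega, ?_⟩⟩
  rw [insertPair_deletePair]
  exact mem_saws.1 hw

/- Both sides sum over the pairs formed by a walk `insertPair w e` with `n + 2` steps and one of its
U-turns `e.1`. -/
lemma sum_insertions {M : Type*} [AddCommMonoid M] (f : (ℕ → V) → ℕ → M) :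
    ∑ w ∈ saws G v n, ∑ e ∈ insertions G v n w, f (insertPair w e) e.1 =
      ∑ w ∈ saws G v (n + 2), ∑ k ∈ uTurns G (n + 2) w, f w k := by
  rw [Finset.sum_sigma', Finset.sum_sigma']
  refine Finset.sum_bij' (fun x _ => ⟨insertPair x.1 x.2, x.2.1⟩)
    (fun y _ => ⟨deletePair y.1 y.2, y.2, y.1 (y.2 + 1), y.1 (y.2 + 2)⟩) ?_ ?_ ?_ ?_
    fun _ _ => rfl
  · rintro ⟨w, e⟩ h
    obtain ⟨hw, he⟩ := Finset.mem_sigma.1 h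
    rw [mem_saws] at hw
    exact Finset.mem_sigma.2
      ⟨mem_saws.2 ((mem_insertions hw).1 he).2, mem_uTurns_insertPair hw he⟩
  · rintro ⟨w, k⟩ h
    obtain ⟨hw, hk⟩ := Finset.mem_sigma.1 h
    exact Finset.mem_sigma.2 (deletePair_mem_saws hw hk)
  · rintro ⟨w, e⟩ -
    simp only [deletePair_insertPair, insertPair_add_one, insertPair_add_two]
  · rintro ⟨w, k⟩ -
    simp only [insertPair_deletePair]

lemma two_mul_sum_double_insertions_le {g : (ℕ → V) → ℝ} (hg : ∀ w, 0 ≤ g w) :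
    2 * ∑ w ∈ saws G v n, ∑ e ∈ insertions G v n w,
        ∑ e' ∈ insertions G v (n + 2) (insertPair w e) with e'.1 < e.1,
          g (insertPair (insertPair w e) e') ≤
      ∑ w ∈ saws G v (n + 4), (#(uTurns G (n + 4) w) : ℝ) ^ 2 * g w := by
  calc 2 * ∑ w ∈ saws G v n, ∑ e ∈ insertions G v n w,
        ∑ e' ∈ insertions G v (n + 2) (insertPair w e) with e'.1 < e.1,
          g (insertPair (insertPair w e) e')
      = 2 * ∑ w ∈ saws G v (n + 2), ∑ l ∈ uTurns G (n + 2) w,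
          ∑ e ∈ insertions G v (n + 2) w with e.1 < l, g (insertPair w e) := by
        rw [sum_insertions fun w l =>
          ∑ e ∈ insertions G v (n + 2) w with e.1 < l, g (insertPair w e)]
    _ = 2 * ∑ w ∈ saws G v (n + 2), ∑ e ∈ insertions G v (n + 2) w,
          #{l ∈ uTurns G (n + 2) (deletePair (insertPair w e) e.1) | e.1 < l} *
            g (insertPair w e) := by
        congr 1
        refine Finset.sum_congr rfl fun w _ => ?_
        rw [Finset.sum_comm' (t' := insertions G v (n + 2) w)
          (s' := fun e => {l ∈ uTurns G (n + 2) w | e.1 < l})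
          (by simp only [Finset.mem_filter]; tauto)]
        simp only [Finset.sum_const, nsmul_eq_mul, deletePair_insertPair]
    _ = ∑ w ∈ saws G v (n + 4),
          (2 * ∑ k ∈ uTurns G (n + 4) w, #{l ∈ uTurns G (n + 2) (deletePair w k) | k < l} : ℕ) *
            g w := by
        rw [sum_insertions fun w k =>
          (#{l ∈ uTurns G (n + 2) (deletePair w k) | k < l} : ℝ) * g w, Finset.mul_sum]
        refine Finset.sum_congr rfl fun w _ => ?_
        push_cast
        rw [mul_assoc, Finset.sum_mul]
    _ ≤ ∑ w ∈ saws G v (n + 4), (#(uTurns G (n + 4) w) : ℝ) ^ 2 * g w := by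
        gcongr with w
        · exact hg w
        · exact_mod_cast two_mul_sum_card_later_uTurns_le w

end DoubleCounting

section Conflicts

variable {V : Type*} {G : SimpleGraph V} [G.LocallyFinite] {v : V} {n Δ : ℕ} {w : ℕ → V}

/-- Two insertions conflict if they cannot both be performed: they are made at the same time or
they visit a common vertex. -/
def Conflict (e e' : Insertion V) : Prop :=
  e.1 = e'.1 ∨ e.2.1 = e'.2.1 ∨ e.2.1 = e'.2.2 ∨ e.2.2 = e'.2.1 ∨ e.2.2 = e'.2.2

lemma mem_insertions_insertPair {e e' : Insertion V} (hw : IsSAW G v n w)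
    (he : e ∈ insertions G v n w) (he' : e' ∈ insertions G v n w) (hlt : e'.1 < e.1)
    (hconf : ¬ Conflict e' e) : e' ∈ insertions G v (n + 2) (insertPair w e) := by
  obtain ⟨-, hwe⟩ := (mem_insertions hw).1 he
  obtain ⟨hk, hwe'⟩ := (mem_insertions hw).1 he'
  obtain ⟨h₁, h₂, h₃, hnew⟩ := (isSAW_insertPair_iff hw hk).1 hwe'
  obtain ⟨-, h11, h12, h21, h22⟩ : _ ∧ _ ∧ _ ∧ _ ∧ _ := by
    simpa only [Conflict, not_or] using hconf
  refine (mem_insertions hwe).2 ⟨by omega, hwe.insertPair (by omega) ?_ h₂ ?_ fun t ht => ?_⟩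
  · rwa [insertPair_of_le e hlt.le]
  · rwa [insertPair_of_le e hlt]
  · rcases eq_or_eq_or_eq_skip e.1 t with rfl | rfl | ⟨s, rfl⟩
    · rw [insertPair_add_one]
      exact ⟨Ne.symm h11, Ne.symm h21⟩
    · rw [insertPair_add_two]
      exact ⟨Ne.symm h12, Ne.symm h22⟩
    · rw [insertPair_skip]
      exact hnew s ((skip_le_add_two_iff ((mem_insertions hw).1 he).1).1 ht)

lemma card_le_sq_of_injOn_neighborFinset {α : Type*} (hΔ : ∀ u, G.degree u ≤ Δ) {s : Finset α}
    {x y : V} (f : α → V × V) (hadj : ∀ i ∈ s, G.Adj x (f i).1 ∧ G.Adj y (f i).2)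
    (hf : Set.InjOn f s) : #s ≤ Δ ^ 2 := by
  calc #s ≤ #(G.neighborFinset x ×ˢ G.neighborFinset y) :=
        Finset.card_le_card_of_injOn f (fun i hi => by simpa using hadj i hi) hf
    _ ≤ Δ ^ 2 := by
        rw [Finset.card_product, sq]
        exact Nat.mul_le_mul (hΔ x) (hΔ y)

lemma card_insertions_filter_time_le (hΔ : ∀ u, G.degree u ≤ Δ) (hw : IsSAW G v n w) (k : ℕ) :
    #{e ∈ insertions G v n w | e.1 = k} ≤ Δ ^ 2 := by
  refine card_le_sq_of_injOn_neighborFinset hΔ (x := w k) (y := w (k + 1)) (fun e => e.2) ?_ ?_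
  · rintro e he
    obtain ⟨hmem, rfl⟩ := Finset.mem_filter.1 he
    obtain ⟨hk, hwe⟩ := (mem_insertions hw).1 hmem
    obtain ⟨h₁, -, h₃, -⟩ := (isSAW_insertPair_iff hw hk).1 hwe
    exact ⟨h₁, h₃.symm⟩
  · rintro ⟨i, x⟩ hi ⟨j, y⟩ hj h
    obtain rfl : i = k := (Finset.mem_filter.1 hi).2
    obtain rfl : j = i := (Finset.mem_filter.1 hj).2
    obtain rfl : x = y := h
    rfl

lemma card_insertions_filter_first_le [DecidableEq V] (hΔ : ∀ u, G.degree u ≤ Δ)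
    (hw : IsSAW G v n w) (c : V) : #{e ∈ insertions G v n w | e.2.1 = c} ≤ Δ ^ 2 := by
  refine card_le_sq_of_injOn_neighborFinset hΔ (x := c) (y := c) (fun e => (w e.1, e.2.2)) ?_ ?_
  · rintro e he
    obtain ⟨hmem, rfl⟩ := Finset.mem_filter.1 he
    obtain ⟨hk, hwe⟩ := (mem_insertions hw).1 hmem
    obtain ⟨h₁, h₂, -, -⟩ := (isSAW_insertPair_iff hw hk).1 hwe
    exact ⟨h₁.symm, h₂⟩
  · rintro ⟨i, a, b⟩ hi ⟨j, a', b'⟩ hj h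
    obtain ⟨hi, hac⟩ := Finset.mem_filter.1 hi
    obtain ⟨hj, hac'⟩ := Finset.mem_filter.1 hj
    obtain ⟨hij, hbb'⟩ := Prod.mk.inj h
    obtain rfl : i = j :=
      hw.injOn ((mem_insertions hw).1 hi).1.le ((mem_insertions hw).1 hj).1.le hij
    exact Sigma.ext rfl (heq_of_eq (Prod.ext (hac.trans hac'.symm) hbb'))

lemma card_insertions_filter_second_le [DecidableEq V] (hΔ : ∀ u, G.degree u ≤ Δ)
    (hw : IsSAW G v n w) (c : V) : #{e ∈ insertions G v n w | e.2.2 = c} ≤ Δ ^ 2 := by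
  refine card_le_sq_of_injOn_neighborFinset hΔ (x := c) (y := c)
    (fun e => (w (e.1 + 1), e.2.1)) ?_ ?_
  · rintro e he
    obtain ⟨hmem, rfl⟩ := Finset.mem_filter.1 he
    obtain ⟨hk, hwe⟩ := (mem_insertions hw).1 hmem
    obtain ⟨-, h₂, h₃, -⟩ := (isSAW_insertPair_iff hw hk).1 hwe
    exact ⟨h₃, h₂.symm⟩
  · rintro ⟨i, a, b⟩ hi ⟨j, a', b'⟩ hj h
    obtain ⟨hi, hbc⟩ := Finset.mem_filter.1 hi
    obtain ⟨hj, hbc'⟩ := Finset.mem_filter.1 hj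
    obtain ⟨hij, haa'⟩ := Prod.mk.inj h
    obtain rfl : i = j := Nat.succ_injective
      (hw.injOn ((mem_insertions hw).1 hi).1 ((mem_insertions hw).1 hj).1 hij)
    exact Sigma.ext rfl (heq_of_eq (Prod.ext haa' (hbc.trans hbc'.symm)))

open Classical in
lemma card_insertions_filter_conflict_le (hΔ : ∀ u, G.degree u ≤ Δ) (hw : IsSAW G v n w)
    (e : Insertion V) : #{e' ∈ insertions G v n w | Conflict e' e} ≤ 5 * Δ ^ 2 := by
  have hsub : {e' ∈ insertions G v n w | Conflict e' e} ⊆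
      {e' ∈ insertions G v n w | e'.1 = e.1} ∪ {e' ∈ insertions G v n w | e'.2.1 = e.2.1} ∪
      {e' ∈ insertions G v n w | e'.2.1 = e.2.2} ∪ {e' ∈ insertions G v n w | e'.2.2 = e.2.1} ∪
      {e' ∈ insertions G v n w | e'.2.2 = e.2.2} := by
    intro e' he'
    obtain ⟨hmem, hconf⟩ := Finset.mem_filter.1 he'
    unfold Conflict at hconf
    simp only [Finset.mem_union, Finset.mem_filter, hmem, true_and]
    tauto
  grw [hsub, Finset.card_union_le, Finset.card_union_le, Finset.card_union_le,
    Finset.card_union_le, card_insertions_filter_time_le hΔ hw,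
    card_insertions_filter_first_le hΔ hw, card_insertions_filter_first_le hΔ hw,
    card_insertions_filter_second_le hΔ hw, card_insertions_filter_second_le hΔ hw]
  omega

lemma card_sq_le_two_mul_sum_card_filter_add {α : Type*} {s : Finset α} {r c : α → α → Prop}
    [DecidableRel r] [DecidableRel c] {N : ℕ}
    (hsplit : ∀ x ∈ s, ∀ y ∈ s, r x y ∨ r y x ∨ c x y) (hc : ∀ y ∈ s, #{x ∈ s | c x y} ≤ N) :
    #s ^ 2 ≤ 2 * ∑ y ∈ s, #{x ∈ s | r x y} + N * #s := by
  classical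
  have hswap : ∑ y ∈ s, #{x ∈ s | r y x} = ∑ y ∈ s, #{x ∈ s | r x y} := by
    simp only [Finset.card_filter]
    exact Finset.sum_comm
  calc #s ^ 2 = ∑ _y ∈ s, #s := by rw [Finset.sum_const, smul_eq_mul, sq]
    _ ≤ ∑ y ∈ s, (#{x ∈ s | r x y} + (#{x ∈ s | r y x} + N)) := by
        refine Finset.sum_le_sum fun y hy => ?_
        have hcover : s ⊆ {x ∈ s | r x y} ∪ ({x ∈ s | r y x} ∪ {x ∈ s | c x y}) := fun x hx => by
          simpa only [Finset.mem_union, Finset.mem_filter, hx, true_and] using hsplit x hx y hy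
        grw [hcover, Finset.card_union_le, Finset.card_union_le, hc y hy]
    _ = 2 * ∑ y ∈ s, #{x ∈ s | r x y} + N * #s := by
        rw [Finset.sum_add_distrib, Finset.sum_add_distrib, hswap, Finset.sum_const, smul_eq_mul]
        ring

lemma card_insertions_sq_le (hΔ : ∀ u, G.degree u ≤ Δ) (hw : IsSAW G v n w) :
    #(insertions G v n w) ^ 2 ≤
      2 * ∑ e ∈ insertions G v n w, #{e' ∈ insertions G v (n + 2) (insertPair w e) | e'.1 < e.1} +
        5 * Δ ^ 2 * #(insertions G v n w) := by
  classical
  refine (card_sq_le_two_mul_sum_card_filter_add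
    (r := fun e' e => e' ∈ insertions G v (n + 2) (insertPair w e) ∧ e'.1 < e.1) (c := Conflict)
    (fun x hx y hy => ?_) fun e _ => card_insertions_filter_conflict_le hΔ hw e).trans ?_
  · by_cases hconf : Conflict x y
    · exact .inr (.inr hconf)
    rcases Nat.lt_or_gt_of_ne (not_or.1 hconf).1 with h | h
    · exact .inl ⟨mem_insertions_insertPair hw hy hx h hconf, h⟩
    · refine .inr (.inl ⟨mem_insertions_insertPair hw hx hy h ?_, h⟩)
      unfold Conflict at *
      tauto
  · gcongr with e
    exact fun e' he' => Finset.mem_filter.2 (Finset.mem_filter.1 he').2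

end Conflicts

section RatioLimit

variable {V : Type*} {G : SimpleGraph V} [G.LocallyFinite] {v : V} {n Δ : ℕ} {w : ℕ → V} {δ : ℝ}

/-- The number of insertions of a walk divided by its number of U-turns, where at least `δ * n`
U-turns are counted in order to keep the quotient bounded. -/
noncomputable def insertionRatio (G : SimpleGraph V) [G.LocallyFinite] (v : V) (δ : ℝ) (n : ℕ)
    (w : ℕ → V) : ℝ :=
  #(insertions G v n w) / max (#(uTurns G n w) : ℝ) (δ * n)

lemma insertionRatio_le (hΔ : ∀ u, G.degree u ≤ Δ) (hδ : 0 < δ) (hn : 0 < n) :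
    insertionRatio G v δ n w ≤ Δ ^ 2 / δ := by
  have : 0 < δ * n := by positivity
  calc insertionRatio G v δ n w ≤ (n * Δ ^ 2 : ℕ) / (δ * n) := by
        unfold insertionRatio
        gcongr
        · exact card_insertions_le hΔ w
        · exact le_max_right _ _
    _ = Δ ^ 2 / δ := by
        push_cast
        field_simp

lemma one_div_le_one_add_div_mul {a b c d : ℝ} (hd : 0 < d) (hb : 0 < b) (hda : d ≤ a)
    (hba : b ≤ a + c) (hc : 0 ≤ c) : 1 / a ≤ (1 + c / d) * (1 / b) := by
  have ha : 0 < a := hd.trans_le hda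
  have hcd : c ≤ c / d * a := by
    rw [div_mul_eq_mul_div, le_div_iff₀ hd]
    gcongr
  rw [mul_one_div, div_le_div_iff₀ ha hb]
  linarith

lemma one_div_card_uTurns_insertPair_le (hδ : 0 < δ) (hn : 0 < n) (hw : IsSAW G v n w)
    {e : Insertion V} (he : e ∈ insertions G v n w)
    (hdense : δ * n ≤ #(uTurns G (n + 2) (insertPair w e))) :
    1 / (#(uTurns G (n + 2) (insertPair w e)) : ℝ) ≤
      (1 + 3 / (δ * n)) * (1 / max (#(uTurns G n w) : ℝ) (δ * n)) := by
  have hδn : 0 < δ * n := by positivity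
  refine one_div_le_one_add_div_mul hδn (lt_max_of_lt_right hδn) hdense (max_le ?_ ?_) zero_le_three
  · have := card_uTurns_deletePair_le (G := G) ((mem_insertions hw).1 he).1 (insertPair w e)
    rw [deletePair_insertPair] at this
    exact_mod_cast this
  · linarith

lemma card_dense_le_sum_insertionRatio (hδ : 0 < δ) (hn : 0 < n) :
    (#{w ∈ saws G v (n + 2) | δ * n ≤ #(uTurns G (n + 2) w)} : ℝ) ≤
      (1 + 3 / (δ * n)) * ∑ w ∈ saws G v n, insertionRatio G v δ n w := by
  have hδn : 0 < δ * n := by positivity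
  let f (w : ℕ → V) (_ : ℕ) : ℝ :=
    if δ * n ≤ #(uTurns G (n + 2) w) then 1 / #(uTurns G (n + 2) w) else 0
  calc (#{w ∈ saws G v (n + 2) | δ * n ≤ #(uTurns G (n + 2) w)} : ℝ)
      = ∑ w ∈ saws G v (n + 2), ∑ k ∈ uTurns G (n + 2) w, f w k := by
        rw [Finset.card_filter, Nat.cast_sum]
        refine Finset.sum_congr rfl fun w _ => ?_
        rw [Finset.sum_const, nsmul_eq_mul]
        split_ifs with h
        · rw [mul_one_div_cancel (hδn.trans_le h).ne', Nat.cast_one]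
        · simp
    _ = ∑ w ∈ saws G v n, ∑ e ∈ insertions G v n w, f (insertPair w e) e.1 :=
        (sum_insertions f).symm
    _ ≤ ∑ w ∈ saws G v n, ∑ _e ∈ insertions G v n w,
          (1 + 3 / (δ * n)) * (1 / max (#(uTurns G n w) : ℝ) (δ * n)) := by
        gcongr with w hw e he
        dsimp only [f]
        split_ifs with h
        · exact one_div_card_uTurns_insertPair_le hδ hn (mem_saws.1 hw) he h
        · positivity
    _ = (1 + 3 / (δ * n)) * ∑ w ∈ saws G v n, insertionRatio G v δ n w := by
        rw [Finset.mul_sum]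
        refine Finset.sum_congr rfl fun w _ => ?_
        rw [Finset.sum_const, nsmul_eq_mul, insertionRatio]
        ring

lemma div_sq_le_of_sq_le {i m q c B K : ℝ} (hm : 0 < m) (hi : 0 ≤ i) (hc : 0 ≤ c) (hK : 0 ≤ K)
    (hiq : i ^ 2 ≤ q + c * i) (hB : i / m ≤ B) :
    (i / m) ^ 2 ≤ q / (m + K) ^ 2 + (2 * K * B ^ 2 + c * B) / m := by
  have hloss : 1 - (m / (m + K)) ^ 2 ≤ 2 * K / m := by
    have hle : 1 - m / (m + K) ≤ K / m := by
      rw [one_sub_div (by positivity), add_sub_cancel_left]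
      gcongr
      linarith
    have := sq_nonneg (1 - m / (m + K))
    rw [mul_div_assoc]
    linarith
  have hmain : (i / m) ^ 2 * (1 - (m / (m + K)) ^ 2) ≤ B ^ 2 * (2 * K / m) := by
    have : 0 ≤ 2 * K / m := by positivity
    calc (i / m) ^ 2 * (1 - (m / (m + K)) ^ 2) ≤ (i / m) ^ 2 * (2 * K / m) := by gcongr
      _ ≤ B ^ 2 * (2 * K / m) := by gcongr
  have hlin : c * i / (m + K) ^ 2 ≤ c * B / m := by
    calc c * i / (m + K) ^ 2 ≤ c * i / m ^ 2 := by gcongr; linarith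
      _ = c * (i / m) / m := by field_simp
      _ ≤ c * B / m := by gcongr
  calc (i / m) ^ 2
      = i ^ 2 / (m + K) ^ 2 + (i / m) ^ 2 * (1 - (m / (m + K)) ^ 2) := by field_simp; ring
    _ ≤ (q + c * i) / (m + K) ^ 2 + B ^ 2 * (2 * K / m) := by gcongr
    _ = q / (m + K) ^ 2 + c * i / (m + K) ^ 2 + B ^ 2 * (2 * K / m) := by ring
    _ ≤ q / (m + K) ^ 2 + c * B / m + B ^ 2 * (2 * K / m) := by gcongr
    _ = q / (m + K) ^ 2 + (2 * K * B ^ 2 + c * B) / m := by ring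

lemma one_div_sq_le_of_double_insertion (hw : IsSAW G v n w) {e e' : Insertion V}
    (he : e ∈ insertions G v n w)
    (he' : e' ∈ insertions G v (n + 2) (insertPair w e)) :
    1 / (max (#(uTurns G n w) : ℝ) (δ * n) + 10) ^ 2 ≤
      1 / max 1 (#(uTurns G (n + 4) (insertPair (insertPair w e) e')) : ℝ) ^ 2 := by
  obtain ⟨hk, hwe⟩ := (mem_insertions hw).1 he
  have h₁ := card_uTurns_le_deletePair (G := G) hk (insertPair w e)
  have h₂ : #(uTurns G (n + 4) (insertPair (insertPair w e) e')) ≤ _ :=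
    card_uTurns_le_deletePair ((mem_insertions hwe).1 he').1 _
  rw [deletePair_insertPair] at h₁ h₂
  have hcard : (#(uTurns G (n + 4) (insertPair (insertPair w e) e')) : ℝ) ≤
      #(uTurns G n w) + 10 := by
    exact_mod_cast (show _ ≤ _ by omega)
  have hmax := le_max_left (#(uTurns G n w) : ℝ) (δ * n)
  have : 0 ≤ max (#(uTurns G n w) : ℝ) (δ * n) := (Nat.cast_nonneg _).trans hmax
  gcongr
  exact max_le (by linarith) (by linarith)

variable (G v n δ) in
lemma sum_double_insertions_div_le :
    ∑ w ∈ saws G v n, 2 * (∑ e ∈ insertions G v n w,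
        (#{e' ∈ insertions G v (n + 2) (insertPair w e) | e'.1 < e.1} : ℝ)) /
          (max (#(uTurns G n w) : ℝ) (δ * n) + 10) ^ 2 ≤ (sawCount G v (n + 4) : ℝ) := by
  let g (w : ℕ → V) : ℝ := 1 / max 1 (#(uTurns G (n + 4) w) : ℝ) ^ 2
  calc _ = 2 * ∑ w ∈ saws G v n, ∑ e ∈ insertions G v n w,
          ∑ _e' ∈ insertions G v (n + 2) (insertPair w e) with _e'.1 < e.1,
            1 / (max (#(uTurns G n w) : ℝ) (δ * n) + 10) ^ 2 := by
        rw [Finset.mul_sum]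
        refine Finset.sum_congr rfl fun w _ => ?_
        simp only [Finset.sum_const, nsmul_eq_mul, ← Finset.sum_mul]
        ring
    _ ≤ 2 * ∑ w ∈ saws G v n, ∑ e ∈ insertions G v n w,
          ∑ e' ∈ insertions G v (n + 2) (insertPair w e) with e'.1 < e.1,
            g (insertPair (insertPair w e) e') := by
        gcongr with w hw e he e' he'
        exact one_div_sq_le_of_double_insertion (mem_saws.1 hw) he (Finset.mem_filter.1 he').1
    _ ≤ ∑ w ∈ saws G v (n + 4), (#(uTurns G (n + 4) w) : ℝ) ^ 2 * g w :=
        two_mul_sum_double_insertions_le fun _ => by positivity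
    _ ≤ ∑ _w ∈ saws G v (n + 4), (1 : ℝ) := by
        gcongr with w
        rw [mul_one_div]
        refine div_le_one_of_le₀ ?_ (by positivity)
        gcongr
        exact le_max_right _ _
    _ = sawCount G v (n + 4) := by rw [Finset.sum_const, card_saws, nsmul_one]

lemma sum_insertionRatio_sq_le (hΔ : ∀ u, G.degree u ≤ Δ) (hδ : 0 < δ) (hn : 0 < n) :
    ∑ w ∈ saws G v n, insertionRatio G v δ n w ^ 2 ≤ sawCount G v (n + 4) +
      (2 * 10 * (Δ ^ 2 / δ) ^ 2 + 5 * Δ ^ 2 * (Δ ^ 2 / δ)) / (δ * n) * sawCount G v n := by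
  have hδn : 0 < δ * n := by positivity
  calc ∑ w ∈ saws G v n, insertionRatio G v δ n w ^ 2
      ≤ ∑ w ∈ saws G v n, (2 * (∑ e ∈ insertions G v n w,
          (#{e' ∈ insertions G v (n + 2) (insertPair w e) | e'.1 < e.1} : ℝ)) /
            (max (#(uTurns G n w) : ℝ) (δ * n) + 10) ^ 2 +
          (2 * 10 * (Δ ^ 2 / δ) ^ 2 + 5 * Δ ^ 2 * (Δ ^ 2 / δ)) / (δ * n)) := by
        refine Finset.sum_le_sum fun w hw => ?_
        have hsq : (#(insertions G v n w) : ℝ) ^ 2 ≤ 2 * (∑ e ∈ insertions G v n w,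
            (#{e' ∈ insertions G v (n + 2) (insertPair w e) | e'.1 < e.1} : ℝ)) +
            5 * Δ ^ 2 * #(insertions G v n w) := by
          exact_mod_cast card_insertions_sq_le hΔ (mem_saws.1 hw)
        refine (div_sq_le_of_sq_le (lt_max_of_lt_right hδn) (Nat.cast_nonneg _) (by positivity)
          (K := 10) (by norm_num) hsq (insertionRatio_le hΔ hδ hn)).trans ?_
        gcongr
        exact le_max_right _ _
    _ ≤ _ := by
        rw [Finset.sum_add_distrib, Finset.sum_const, card_saws, nsmul_eq_mul,
          mul_comm (sawCount G v n : ℝ)]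
        gcongr
        exact sum_double_insertions_div_le G v n δ

/-- U-turns have positive density: up to a fraction `O(1 / n)`, every `n`-step self-avoiding walk
from `v` makes at least `δ * n` U-turns. -/
def UTurnsDense (G : SimpleGraph V) [G.LocallyFinite] (v : V) : Prop :=
  ∃ δ : ℝ, 0 < δ ∧ (fun n : ℕ => (#{w ∈ saws G v n | (#(uTurns G n w) : ℝ) < δ * n} : ℝ))
    =O[atTop] fun n : ℕ => (sawCount G v n : ℝ) / n

lemma sq_sum_insertionRatio_div_le (hΔ : ∀ u, G.degree u ≤ Δ) (hδ : 0 < δ) (hn : 0 < n)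
    (hpos : 0 < sawCount G v n) :
    ((∑ w ∈ saws G v n, insertionRatio G v δ n w) / sawCount G v n) ^ 2 ≤
      (sawCount G v (n + 4) : ℝ) / sawCount G v n +
      (2 * 10 * (Δ ^ 2 / δ) ^ 2 + 5 * Δ ^ 2 * (Δ ^ 2 / δ)) / δ / n := by
  have : (0 : ℝ) < sawCount G v n := by exact_mod_cast hpos
  have hcs := sq_sum_le_card_mul_sum_sq (s := saws G v n) (f := insertionRatio G v δ n)
  rw [card_saws] at hcs
  rw [div_pow, div_le_iff₀ (by positivity)]
  grw [hcs, sum_insertionRatio_sq_le hΔ hδ hn]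
  apply le_of_eq
  field_simp

variable (G v n) in
lemma sawCount_add_two_le (hΔ : ∀ u, G.degree u ≤ Δ) :
    sawCount G v (n + 2) ≤ sawCount G v n * Δ ^ 2 := by
  grw [sawCount_succ_le G v _ hΔ, sawCount_succ_le G v _ hΔ, mul_assoc, ← sq]

lemma card_not_dense_le {C : ℝ} (hC : 0 ≤ C) (hΔ : ∀ u, G.degree u ≤ Δ) (hδ : 0 < δ) (hn : 0 < n)
    (hsparse : (#{w ∈ saws G v (n + 2) | (#(uTurns G (n + 2) w) : ℝ) < δ * (n + 2 : ℕ)} : ℝ) ≤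
      C * (sawCount G v (n + 2) / (n + 2 : ℕ))) :
    (#{w ∈ saws G v (n + 2) | ¬ δ * n ≤ #(uTurns G (n + 2) w)} : ℝ) ≤
      C * Δ ^ 2 / n * sawCount G v n := by
  have hgrow : (sawCount G v (n + 2) : ℝ) ≤ sawCount G v n * Δ ^ 2 := by
    exact_mod_cast sawCount_add_two_le G v n hΔ
  calc (#{w ∈ saws G v (n + 2) | ¬ δ * n ≤ #(uTurns G (n + 2) w)} : ℝ)
      ≤ #{w ∈ saws G v (n + 2) | (#(uTurns G (n + 2) w) : ℝ) < δ * (n + 2 : ℕ)} := by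
        gcongr with w
        intro h
        refine (not_le.1 h).trans_le ?_
        gcongr
        omega
    _ ≤ C * (sawCount G v n * Δ ^ 2 / n) := by
        grw [hsparse, hgrow]
        gcongr
        omega
    _ = C * Δ ^ 2 / n * sawCount G v n := by ring

lemma sawCount_div_le {C : ℝ} (hC : 0 ≤ C) (hΔ : ∀ u, G.degree u ≤ Δ) (hδ : 0 < δ) (hn : 0 < n)
    (hpos : 0 < sawCount G v n)
    (hsparse : (#{w ∈ saws G v (n + 2) | (#(uTurns G (n + 2) w) : ℝ) < δ * (n + 2 : ℕ)} : ℝ) ≤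
      C * (sawCount G v (n + 2) / (n + 2 : ℕ))) :
    (sawCount G v (n + 2) : ℝ) / sawCount G v n ≤
      (∑ w ∈ saws G v n, insertionRatio G v δ n w) / sawCount G v n +
        (3 / δ * (Δ ^ 2 / δ) + C * Δ ^ 2) / n := by
  have hσ : (0 : ℝ) < sawCount G v n := by exact_mod_cast hpos
  have hsum : ∑ w ∈ saws G v n, insertionRatio G v δ n w ≤ Δ ^ 2 / δ * sawCount G v n := by
    rw [mul_comm, ← card_saws, ← nsmul_eq_mul]
    exact Finset.sum_le_card_nsmul _ _ _ fun w _ => insertionRatio_le hΔ hδ hn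
  rw [div_add' _ _ _ hσ.ne', div_le_div_iff_of_pos_right hσ]
  calc (sawCount G v (n + 2) : ℝ)
      = #{w ∈ saws G v (n + 2) | δ * n ≤ #(uTurns G (n + 2) w)} +
          #{w ∈ saws G v (n + 2) | ¬ δ * n ≤ #(uTurns G (n + 2) w)} := by
        rw [← card_saws]
        exact_mod_cast (Finset.card_filter_add_card_filter_not _).symm
    _ ≤ (1 + 3 / (δ * n)) * ∑ w ∈ saws G v n, insertionRatio G v δ n w +
          C * Δ ^ 2 / n * sawCount G v n := by
        gcongr
        · exact card_dense_le_sum_insertionRatio hδ hn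
        · exact card_not_dense_le hC hΔ hδ hn hsparse
    _ = ∑ w ∈ saws G v n, insertionRatio G v δ n w +
          3 / (δ * n) * ∑ w ∈ saws G v n, insertionRatio G v δ n w +
            C * Δ ^ 2 / n * sawCount G v n := by ring
    _ ≤ ∑ w ∈ saws G v n, insertionRatio G v δ n w +
          3 / (δ * n) * (Δ ^ 2 / δ * sawCount G v n) + C * Δ ^ 2 / n * sawCount G v n := by
        gcongr
    _ = _ := by field_simp; ring

theorem UTurnsDense.exists_sq_ratio_sub_div_le (h : UTurnsDense G v) (hΔ : ∀ u, G.degree u ≤ Δ)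
    (hpos : ∀ n, 0 < sawCount G v n) :
    ∃ D : ℝ, ∀ᶠ n : ℕ in atTop, ((sawCount G v (n + 2) : ℝ) / sawCount G v n) ^ 2 - D / n ≤
      (sawCount G v (n + 4) : ℝ) / sawCount G v n := by
  obtain ⟨δ, hδ, hsparse⟩ := h
  obtain ⟨C, hC, hsparse⟩ := hsparse.exists_nonneg
  set D₁ : ℝ := 3 / δ * (Δ ^ 2 / δ) + C * Δ ^ 2
  set D₂ : ℝ := (2 * 10 * (Δ ^ 2 / δ) ^ 2 + 5 * Δ ^ 2 * (Δ ^ 2 / δ)) / δ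
  refine ⟨D₂ + 2 * Δ ^ 2 * D₁, ?_⟩
  filter_upwards [(tendsto_add_atTop_nat 2).eventually hsparse.bound, eventually_gt_atTop 0]
    with n hbad hn
  rw [Real.norm_of_nonneg (by positivity), Real.norm_of_nonneg (by positivity)] at hbad
  set r : ℝ := (sawCount G v (n + 2) : ℝ) / sawCount G v n
  set x : ℝ := (∑ w ∈ saws G v n, insertionRatio G v δ n w) / sawCount G v n
  have hrx : r ≤ x + D₁ / n := sawCount_div_le hC hΔ hδ hn (hpos n) hbad
  have hx2 : x ^ 2 ≤ (sawCount G v (n + 4) : ℝ) / sawCount G v n + D₂ / n :=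
    sq_sum_insertionRatio_div_le hΔ hδ hn (hpos n)
  have hrΔ : r ≤ Δ ^ 2 := by
    refine div_le_of_le_mul₀ (Nat.cast_nonneg _) (by positivity) ?_
    rw [mul_comm]
    exact_mod_cast sawCount_add_two_le G v n hΔ
  have : 0 ≤ r := by positivity
  have hdiff : 2 * (r * (r - x)) ≤ 2 * (Δ ^ 2 * (D₁ / n)) := by
    have : 0 ≤ D₁ / n := by positivity
    calc 2 * (r * (r - x)) ≤ 2 * (r * (D₁ / n)) := by gcongr; linarith
      _ ≤ 2 * (Δ ^ 2 * (D₁ / n)) := by gcongr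
  have hsq := sq_nonneg (r - x)
  have hD : (D₂ + 2 * Δ ^ 2 * D₁) / n = D₂ / n + 2 * (Δ ^ 2 * (D₁ / n)) := by ring
  linarith

theorem tendsto_sawCount_ratio_two (h : UTurnsDense G v) (hΔ : ∀ u, G.degree u ≤ Δ) {μ : ℝ}
    (hμ : 1 < μ)
    (hroot : Tendsto (fun n : ℕ => (sawCount G v n : ℝ) ^ ((1 : ℝ) / n)) atTop (nhds μ)) :
    Tendsto (fun n => (sawCount G v (n + 2) : ℝ) / sawCount G v n) atTop (nhds (μ ^ 2)) := by
  have hpos := sawCount_pos_of_tendsto_root hΔ hμ hroot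
  obtain ⟨D, hD⟩ := h.exists_sq_ratio_sub_div_le hΔ hpos
  exact tendsto_ratio_of_sq_ratio_sub_div_le (a := fun n => (sawCount G v n : ℝ))
    (fun n => mod_cast hpos n) hμ hroot two_pos hD

end RatioLimit

section SquareLattice

/-- The four unit steps of the square lattice. -/
def dirs : Finset (ℤ × ℤ) := {(1, 0), (-1, 0), (0, 1), (0, -1)}

lemma squareLattice_adj_iff {p q : ℤ × ℤ} : squareLattice.Adj p q ↔ q - p ∈ dirs := by
  obtain ⟨a, b⟩ := p
  obtain ⟨c, d⟩ := q
  simp only [squareLattice, SimpleGraph.fromRel_adj, ne_eq, Prod.mk.injEq, dirs, Prod.mk_sub_mk,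
    Finset.mem_insert, Finset.mem_singleton]
  grind

lemma squareLattice_neighborSet (p : ℤ × ℤ) :
    squareLattice.neighborSet p = dirs.map (addLeftEmbedding p) := by
  ext q
  simp only [SimpleGraph.mem_neighborSet, squareLattice_adj_iff, Finset.coe_map,
    addLeftEmbedding_apply, Set.mem_image, Finset.mem_coe]
  exact ⟨fun h => ⟨q - p, h, add_sub_cancel p q⟩, by rintro ⟨d, hd, rfl⟩; simpa using hd⟩

instance : squareLattice.LocallyFinite := fun p =>
  Fintype.ofFinset (dirs.map (addLeftEmbedding p)) fun q => by
    rw [squareLattice_neighborSet, Finset.mem_coe]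

lemma squareLattice_neighborFinset (p : ℤ × ℤ) :
    squareLattice.neighborFinset p = dirs.map (addLeftEmbedding p) := by
  ext q
  rw [SimpleGraph.mem_neighborFinset, ← SimpleGraph.mem_neighborSet, squareLattice_neighborSet,
    Finset.mem_coe]

lemma squareLattice_degree (p : ℤ × ℤ) : squareLattice.degree p = 4 := by
  rw [← SimpleGraph.card_neighborFinset_eq_degree, squareLattice_neighborFinset, Finset.card_map]
  rfl

end SquareLattice

section Avoiding

variable {F F' : Set (ℤ × ℤ)} {n : ℕ} {w : ℕ → ℤ × ℤ} {d : ℤ × ℤ}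

open Classical in
/-- The `n`-step self-avoiding walks from the origin that do not visit `F` after time `0`. -/
noncomputable def avoidingSaws (F : Set (ℤ × ℤ)) (n : ℕ) : Finset (ℕ → ℤ × ℤ) :=
  {w ∈ saws squareLattice 0 n | ∀ t, 0 < t → t ≤ n → w t ∉ F}

lemma mem_avoidingSaws :
    w ∈ avoidingSaws F n ↔ IsSAW squareLattice 0 n w ∧ ∀ t, 0 < t → t ≤ n → w t ∉ F := by
  classical rw [avoidingSaws, Finset.mem_filter, mem_saws]

lemma card_avoidingSaws_le_sawCount : #(avoidingSaws F n) ≤ sawCount squareLattice 0 n := by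
  classical
  rw [← card_saws, avoidingSaws]
  exact Finset.card_filter_le _ _

lemma card_avoidingSaws_zero : #(avoidingSaws F 0) = 1 := by
  refine Finset.card_eq_one.2 ⟨fun _ => 0, Finset.ext fun w => ?_⟩
  rw [mem_avoidingSaws, isSAW_zero_iff, Finset.mem_singleton]
  exact and_iff_left fun t h₀ h => absurd h h₀.not_ge

lemma card_avoidingSaws_anti (h : F ⊆ F') : #(avoidingSaws F' n) ≤ #(avoidingSaws F n) := by
  refine Finset.card_le_card fun w hw => ?_
  rw [mem_avoidingSaws] at hw ⊢
  exact ⟨hw.1, fun t h₀ ht hF => hw.2 t h₀ ht (h hF)⟩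

/-- The reflection of the square lattice in the horizontal axis. -/
def reflect (p : ℤ × ℤ) : ℤ × ℤ := (p.1, -p.2)

lemma reflect_injective : Function.Injective reflect := fun p q h => by
  simpa only [reflect, Prod.ext_iff, neg_inj] using h

lemma reflect_sub_reflect_mem_dirs {p q : ℤ × ℤ} (h : q - p ∈ dirs) :
    reflect q - reflect p ∈ dirs := by
  simp only [dirs, reflect, Finset.mem_insert, Finset.mem_singleton, Prod.ext_iff, Prod.fst_sub,
    Prod.snd_sub] at h ⊢
  omega

lemma card_avoidingSaws_le_of_reflect (h : Set.MapsTo reflect F F') :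
    #(avoidingSaws F' n) ≤ #(avoidingSaws F n) := by
  refine Finset.card_le_card_of_injOn (reflect ∘ ·) (fun w hw => ?_)
    (reflect_injective.comp_left.injOn)
  obtain ⟨hw, hF⟩ := mem_avoidingSaws.1 hw
  refine mem_avoidingSaws.2 ⟨⟨?_, fun t ht => ?_, ?_, fun t ht => ?_⟩, fun t h₀ ht hmem => ?_⟩
  · exact congrArg reflect hw.start
  · exact squareLattice_adj_iff.2
      (reflect_sub_reflect_mem_dirs (squareLattice_adj_iff.1 (hw.adj t ht)))
  · exact reflect_injective.comp_injOn hw.injOn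
  · exact congrArg reflect (hw.const t ht)
  · refine hF t h₀ ht ?_
    simpa [reflect] using h hmem

/-- The walk that makes the step `d` from the origin and then follows the translate of `w`. -/
def stepThen (d : ℤ × ℤ) (w : ℕ → ℤ × ℤ) : ℕ → ℤ × ℤ
  | 0 => 0
  | t + 1 => d + w t

/-- The points a walk must avoid after the step `d` if it is to avoid `F` and the origin, in
coordinates centred at its position after that step. -/
def shift (F : Set (ℤ × ℤ)) (d : ℤ × ℤ) : Set (ℤ × ℤ) := {p | d + p ∈ F ∨ d + p = 0}

lemma stepThen_mem_avoidingSaws (hd : d ∈ dirs) (hdF : d ∉ F)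
    (hw : w ∈ avoidingSaws (shift F d) n) :
    stepThen d w ∈ avoidingSaws F (n + 1) := by
  obtain ⟨hw, hF⟩ := mem_avoidingSaws.1 hw
  have hd0 : d ≠ 0 := by rintro rfl; exact absurd hd (by decide)
  have havoid (t : ℕ) (ht : t ≤ n) : d + w t ∉ F ∧ d + w t ≠ 0 := by
    rcases t.eq_zero_or_pos with rfl | h₀
    · simpa only [hw.start, add_zero] using ⟨hdF, hd0⟩
    · exact not_or.1 (hF t h₀ ht)
  refine mem_avoidingSaws.2 ⟨⟨rfl, ?_, ?_, ?_⟩, ?_⟩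
  · rintro (_ | t) ht
    · simpa only [squareLattice_adj_iff, stepThen, hw.start, add_zero, sub_zero] using hd
    · rw [squareLattice_adj_iff, stepThen, stepThen, add_sub_add_left_eq_sub,
        ← squareLattice_adj_iff]
      exact hw.adj t (by omega)
  · rintro (_ | s) hs (_ | t) ht h
    · rfl
    · exact absurd h.symm (havoid t (Nat.le_of_succ_le_succ ht)).2
    · exact absurd h (havoid s (Nat.le_of_succ_le_succ hs)).2
    · exact congrArg _ (hw.injOn (Nat.le_of_succ_le_succ hs) (Nat.le_of_succ_le_succ ht)
        (add_left_cancel h))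
  · rintro (_ | t) ht
    · omega
    · rw [stepThen, stepThen, hw.const t (Nat.le_of_succ_le_succ ht)]
  · rintro (_ | t) h₀ ht
    · omega
    · exact (havoid t (Nat.le_of_succ_le_succ ht)).1

lemma sum_card_avoidingSaws_shift_le {D : Finset (ℤ × ℤ)} (hD : D ⊆ dirs) (hDF : ∀ d ∈ D, d ∉ F) :
    ∑ d ∈ D, #(avoidingSaws (shift F d) n) ≤ #(avoidingSaws F (n + 1)) := by
  rw [← Finset.card_sigma]
  refine Finset.card_le_card_of_injOn (fun x => stepThen x.1 x.2) ?_ ?_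
  · rintro ⟨d, w⟩ h
    obtain ⟨hd, hw⟩ := Finset.mem_sigma.1 h
    exact stepThen_mem_avoidingSaws (hD hd) (hDF d hd) hw
  · rintro ⟨d, w⟩ h ⟨d', w'⟩ h' heq
    have hw : w 0 = 0 := (mem_avoidingSaws.1 (Finset.mem_sigma.1 h).2).1.start
    have hw' : w' 0 = 0 := (mem_avoidingSaws.1 (Finset.mem_sigma.1 h').2).1.start
    obtain rfl : d = d' := by
      simpa only [stepThen, zero_add, hw, hw', add_zero] using congrFun heq 1
    obtain rfl : w = w' := funext fun t => add_left_cancel (congrFun heq (t + 1))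
    rfl

end Avoiding

section LowerBound

variable {n : ℕ}

/-- A barrier keeping one column away from the current position. -/
def distantBarrier : Set (ℤ × ℤ) := {p | p.1 < -1 ∨ p.1 = -1 ∧ p.2 ≤ 0}

/-- A barrier below the current position, with an open column behind and above it. -/
def lowBarrier : Set (ℤ × ℤ) := {p | p.1 < -1 ∨ (p.1 = -1 ∨ p.1 = 0) ∧ p.2 < 0}

/-- A barrier directly behind and below the current position. -/
def adjacentBarrier : Set (ℤ × ℤ) := {p | p.1 < 0 ∨ p.1 = 0 ∧ p.2 < 0}

/-- A barrier behind and below the current position and diagonally in front of it. -/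
def cupBarrier : Set (ℤ × ℤ) := {p | p.1 < 0 ∨ (p.1 = 0 ∨ p.1 = 1) ∧ p.2 < 0}

/-- A barrier blocking all steps from the current position except the upward one. -/
def pitBarrier : Set (ℤ × ℤ) := {p | p.1 < 0 ∨ p.1 = 0 ∧ p.2 < 0 ∨ p.1 = 1 ∧ p.2 ≤ 0}

lemma card_avoidingSaws_distantBarrier_succ :
    #(avoidingSaws distantBarrier n) + #(avoidingSaws lowBarrier n) +
      #(avoidingSaws adjacentBarrier n) ≤ #(avoidingSaws distantBarrier (n + 1)) := by
  refine le_trans ?_ (sum_card_avoidingSaws_shift_le (D := {(1, 0), (0, 1), (0, -1)}) (by decide)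
    (by simp [distantBarrier]))
  rw [Finset.sum_insert (by decide), Finset.sum_pair (by decide), ← add_assoc]
  gcongr ?_ + ?_ + ?_
  · refine card_avoidingSaws_anti fun p => ?_
    simp only [shift, distantBarrier, Set.mem_ofPred_eq, Prod.ext_iff, Prod.fst_add, Prod.snd_add,
      Prod.fst_zero, Prod.snd_zero]
    omega
  · refine card_avoidingSaws_anti fun p => ?_
    simp only [shift, distantBarrier, lowBarrier, Set.mem_ofPred_eq, Prod.ext_iff, Prod.fst_add,
      Prod.snd_add, Prod.fst_zero, Prod.snd_zero]
    omega
  · refine card_avoidingSaws_le_of_reflect fun p => ?_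
    simp only [shift, distantBarrier, adjacentBarrier, reflect, Set.mem_ofPred_eq, Prod.ext_iff,
      Prod.fst_add, Prod.snd_add, Prod.fst_zero, Prod.snd_zero]
    omega

lemma card_avoidingSaws_lowBarrier_succ :
    #(avoidingSaws lowBarrier n) + #(avoidingSaws distantBarrier n) +
      #(avoidingSaws pitBarrier n) ≤ #(avoidingSaws lowBarrier (n + 1)) := by
  refine le_trans ?_ (sum_card_avoidingSaws_shift_le (D := {(0, 1), (1, 0), (-1, 0)}) (by decide)
    (by simp [lowBarrier]))
  rw [Finset.sum_insert (by decide), Finset.sum_pair (by decide), ← add_assoc]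
  gcongr ?_ + ?_ + ?_ <;> refine card_avoidingSaws_anti fun p => ?_ <;>
    simp only [shift, lowBarrier, distantBarrier, pitBarrier, Set.mem_ofPred_eq, Prod.ext_iff,
      Prod.fst_add, Prod.snd_add, Prod.fst_zero, Prod.snd_zero] <;> omega

lemma card_avoidingSaws_pitBarrier_succ :
    #(avoidingSaws cupBarrier n) ≤ #(avoidingSaws pitBarrier (n + 1)) := by
  refine le_trans ?_ (sum_card_avoidingSaws_shift_le (D := {(0, 1)}) (by decide)
    (by simp [pitBarrier]))
  rw [Finset.sum_singleton]
  refine card_avoidingSaws_anti fun p => ?_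
  simp only [shift, pitBarrier, cupBarrier, Set.mem_ofPred_eq, Prod.ext_iff, Prod.fst_add,
    Prod.snd_add, Prod.fst_zero, Prod.snd_zero]
  omega

lemma card_avoidingSaws_cupBarrier_succ :
    #(avoidingSaws cupBarrier n) + #(avoidingSaws adjacentBarrier n) ≤
      #(avoidingSaws cupBarrier (n + 1)) := by
  refine le_trans ?_ (sum_card_avoidingSaws_shift_le (D := {(0, 1), (1, 0)}) (by decide)
    (by simp [cupBarrier]))
  rw [Finset.sum_pair (by decide)]
  gcongr ?_ + ?_ <;> refine card_avoidingSaws_anti fun p => ?_ <;>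
    simp only [shift, cupBarrier, adjacentBarrier, Set.mem_ofPred_eq, Prod.ext_iff, Prod.fst_add,
      Prod.snd_add, Prod.fst_zero, Prod.snd_zero] <;> omega

lemma card_avoidingSaws_adjacentBarrier_succ :
    #(avoidingSaws adjacentBarrier n) + #(avoidingSaws distantBarrier n) ≤
      #(avoidingSaws adjacentBarrier (n + 1)) := by
  refine le_trans ?_ (sum_card_avoidingSaws_shift_le (D := {(0, 1), (1, 0)}) (by decide)
    (by simp [adjacentBarrier]))
  rw [Finset.sum_pair (by decide)]
  gcongr ?_ + ?_ <;> refine card_avoidingSaws_anti fun p => ?_ <;>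
    simp only [shift, adjacentBarrier, distantBarrier, Set.mem_ofPred_eq, Prod.ext_iff,
      Prod.fst_add, Prod.snd_add, Prod.fst_zero, Prod.snd_zero] <;> omega

/- The coefficients form an approximate Perron eigenvector, with eigenvalue `2.47`, of the linear
recursion satisfied by the five counts. -/
lemma mul_pow_le_card_avoidingSaws (n : ℕ) :
    (2.47 : ℝ) ^ n ≤ #(avoidingSaws distantBarrier n) ∧
    0.8 * (2.47 : ℝ) ^ n ≤ #(avoidingSaws lowBarrier n) ∧
    0.68 * (2.47 : ℝ) ^ n ≤ #(avoidingSaws adjacentBarrier n) ∧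
    0.46 * (2.47 : ℝ) ^ n ≤ #(avoidingSaws cupBarrier n) ∧
    0.18 * (2.47 : ℝ) ^ n ≤ #(avoidingSaws pitBarrier n) := by
  induction n with
  | zero => norm_num [card_avoidingSaws_zero]
  | succ n ih =>
    obtain ⟨hdist, hlow, hadj, hcup, hpit⟩ := ih
    have hdist' := (Nat.cast_le (α := ℝ)).2 (card_avoidingSaws_distantBarrier_succ (n := n))
    have hlow' := (Nat.cast_le (α := ℝ)).2 (card_avoidingSaws_lowBarrier_succ (n := n))
    have hadj' := (Nat.cast_le (α := ℝ)).2 (card_avoidingSaws_adjacentBarrier_succ (n := n))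
    have hcup' := (Nat.cast_le (α := ℝ)).2 (card_avoidingSaws_cupBarrier_succ (n := n))
    have hpit' := (Nat.cast_le (α := ℝ)).2 (card_avoidingSaws_pitBarrier_succ (n := n))
    have hpos : (0 : ℝ) < 2.47 ^ n := by positivity
    rw [pow_succ]
    push_cast at hdist' hlow' hadj' hcup' hpit'
    refine ⟨?_, ?_, ?_, ?_, ?_⟩ <;> linarith

theorem pow_le_sawCount_squareLattice (n : ℕ) : (2.47 : ℝ) ^ n ≤ sawCount squareLattice 0 n :=
  (mul_pow_le_card_avoidingSaws n).1.trans (mod_cast card_avoidingSaws_le_sawCount)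

end LowerBound

section UTurnDensity

open Classical in
lemma card_uTurns_extend {V : Type*} (G : SimpleGraph V) (n : ℕ) (w : ℕ → V) (x : V) :
    #(uTurns G (n + 3) (extend (n + 2) w x)) =
      #(uTurns G (n + 2) w) + if G.Adj (w n) x then 1 else 0 := by
  have hold : #{t ∈ Finset.range n | G.Adj (extend (n + 2) w x t) (extend (n + 2) w x (t + 3))} =
      #(uTurns G (n + 2) w) := by
    refine congrArg _ (Finset.filter_congr fun t ht => ?_)
    have := Finset.mem_range.1 ht
    rw [extend_of_le x (by omega), extend_of_le x (by omega)]
  rw [uTurns, show n + 3 - 2 = n + 1 from rfl, Finset.range_add_one, Finset.filter_insert,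
    extend_of_le x (by omega), extend_of_lt x (Nat.lt_succ_self (n + 2)), ← hold]
  split_ifs
  · exact Finset.card_insert_of_notMem fun h => by simp at h
  · rfl

variable {n : ℕ} {w : ℕ → ℤ × ℤ}

/-- The weight of two successive steps `d` and `d'` in the definition of `uTurnWeight`. -/
noncomputable def turnWeight (d d' : ℤ × ℤ) : ℝ := if d = d' then 1 else 0.72

/-- A weight on walks with `n + 2` steps that penalizes U-turns. Without U-turns, a walk has one
straight continuation and two turns after going straight, and one of each after a turn; the vector
`(1, 1 / √2)` is an eigenvector of this transfer matrix, with eigenvalue `1 + √2 < 2.44`. -/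
noncomputable def uTurnWeight (n : ℕ) (w : ℕ → ℤ × ℤ) : ℝ :=
  0.05 ^ #(uTurns squareLattice (n + 2) w) * turnWeight (w (n + 1) - w n) (w (n + 2) - w (n + 1))

lemma le_turnWeight (d d' : ℤ × ℤ) : 0.72 ≤ turnWeight d d' := by
  unfold turnWeight
  split_ifs <;> norm_num

lemma turnWeight_nonneg (d d' : ℤ × ℤ) : 0 ≤ turnWeight d d' :=
  le_trans (by norm_num) (le_turnWeight d d')

lemma uTurnWeight_nonneg : 0 ≤ uTurnWeight n w :=
  mul_nonneg (by positivity) (turnWeight_nonneg _ _)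

lemma sum_dirs_turnWeight_le {d₁ d₂ : ℤ × ℤ} (h₁ : d₁ ∈ dirs) (h₂ : d₂ ∈ dirs) (h : d₁ + d₂ ≠ 0) :
    ∑ d ∈ dirs with d₂ + d ≠ 0, (if d₁ + d₂ + d ∈ dirs then (0.05 : ℝ) else 1) * turnWeight d₂ d ≤
      2.44 * turnWeight d₁ d₂ := by
  rw [Finset.sum_filter]
  simp only [dirs, Finset.mem_insert, Finset.mem_singleton] at h₁ h₂
  rcases h₁ with rfl | rfl | rfl | rfl <;> rcases h₂ with rfl | rfl | rfl | rfl <;>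
    first
    | exact absurd (by decide) h
    | norm_num [dirs, turnWeight, Finset.sum_insert]

lemma uTurnWeight_extend (d : ℤ × ℤ) :
    uTurnWeight (n + 1) (extend (n + 2) w (w (n + 2) + d)) =
      0.05 ^ #(uTurns squareLattice (n + 2) w) *
        ((if w (n + 1) - w n + (w (n + 2) - w (n + 1)) + d ∈ dirs then (0.05 : ℝ) else 1) *
          turnWeight (w (n + 2) - w (n + 1)) d) := by
  have hstep : w (n + 1) - w n + (w (n + 2) - w (n + 1)) + d = w (n + 2) + d - w n := by abel
  rw [uTurnWeight, card_uTurns_extend, extend_of_le (t := n + 1) _ (by omega),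
    extend_of_le _ le_rfl, extend_of_lt _ (by omega), add_sub_cancel_left, squareLattice_adj_iff,
    hstep, pow_add, mul_assoc]
  split_ifs <;> simp

lemma sum_uTurnWeight_extend_le (hw : IsSAW squareLattice 0 (n + 2) w) :
    ∑ x ∈ squareLattice.neighborFinset (w (n + 2)) with ∀ t ≤ n + 2, w t ≠ x,
      uTurnWeight (n + 1) (extend (n + 2) w x) ≤ 2.44 * uTurnWeight n w := by
  have hstep (t : ℕ) (ht : t < n + 2) : w (t + 1) - w t ∈ dirs :=
    squareLattice_adj_iff.1 (hw.adj t ht)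
  have hne : w (n + 1) - w n + (w (n + 2) - w (n + 1)) ≠ 0 := by
    rw [add_comm, sub_add_sub_cancel, sub_ne_zero]
    exact hw.ne le_rfl (by omega) (by omega)
  rw [squareLattice_neighborFinset, Finset.filter_map, Finset.sum_map]
  calc ∑ d ∈ dirs with ∀ t ≤ n + 2, w t ≠ w (n + 2) + d,
        uTurnWeight (n + 1) (extend (n + 2) w (w (n + 2) + d))
      ≤ ∑ d ∈ dirs with w (n + 2) - w (n + 1) + d ≠ 0,
          uTurnWeight (n + 1) (extend (n + 2) w (w (n + 2) + d)) := by
        refine Finset.sum_le_sum_of_subset_of_nonneg ?_ fun _ _ _ => uTurnWeight_nonneg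
        refine Finset.monotone_filter_right _ fun d _ hd h => hd (n + 1) (by omega) ?_
        rw [sub_add_eq_add_sub, sub_eq_zero] at h
        exact h.symm
    _ ≤ 0.05 ^ #(uTurns squareLattice (n + 2) w) *
          (2.44 * turnWeight (w (n + 1) - w n) (w (n + 2) - w (n + 1))) := by
        simp only [uTurnWeight_extend, ← Finset.mul_sum]
        gcongr
        exact sum_dirs_turnWeight_le (hstep n (by omega)) (hstep (n + 1) (by omega)) hne
    _ = 2.44 * uTurnWeight n w := mul_left_comm _ _ _

lemma sum_uTurnWeight_le (n : ℕ) :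
    ∑ w ∈ saws squareLattice 0 (n + 2), uTurnWeight n w ≤
      2.44 ^ n * ∑ w ∈ saws squareLattice 0 2, uTurnWeight 0 w := by
  induction n with
  | zero => simp
  | succ n ih =>
    calc ∑ w ∈ saws squareLattice 0 (n + 3), uTurnWeight (n + 1) w
        ≤ ∑ w ∈ saws squareLattice 0 (n + 2), 2.44 * uTurnWeight n w := by
          rw [sum_saws_succ]
          gcongr with w hw
          exact sum_uTurnWeight_extend_le (mem_saws.1 hw)
      _ ≤ 2.44 ^ (n + 1) * ∑ w ∈ saws squareLattice 0 2, uTurnWeight 0 w := by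
          rw [← Finset.mul_sum, pow_succ', mul_assoc]
          gcongr

lemma le_pow_mul_uTurnWeight
    (hsparse : (#(uTurns squareLattice (n + 2) w) : ℝ) < 1 / 300 * (n + 2 : ℕ)) :
    0.72 ≤ 1.011 ^ (n + 2) * uTurnWeight n w := by
  set j := #(uTurns squareLattice (n + 2) w)
  have hjn : 300 * j ≤ n + 2 := by
    have : (300 * j : ℝ) < (n + 2 : ℕ) := by linarith
    exact_mod_cast this.le
  have hpow : (1 : ℝ) ≤ 1.011 ^ (n + 2) * 0.05 ^ j := by
    calc (1 : ℝ) ≤ ((1.011 ^ 100) ^ 3 * 0.05) ^ j := one_le_pow₀ (by norm_num)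
      _ = 1.011 ^ (300 * j) * 0.05 ^ j := by
        rw [mul_pow, ← pow_mul (1.011 : ℝ) 100 3, ← pow_mul]
      _ ≤ 1.011 ^ (n + 2) * 0.05 ^ j := by
        gcongr
        norm_num
  rw [uTurnWeight, ← mul_assoc]
  exact (le_turnWeight _ _).trans (le_mul_of_one_le_left (turnWeight_nonneg _ _) hpow)

lemma isBigO_card_sparse :
    (fun n : ℕ => (#{w ∈ saws squareLattice 0 n |
        (#(uTurns squareLattice n w) : ℝ) < 1 / 300 * n} : ℝ)) =O[atTop]
      fun n : ℕ => (2.467 : ℝ) ^ n := by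
  set Q := ∑ w ∈ saws squareLattice 0 2, uTurnWeight 0 w
  have hQ : 0 ≤ Q := Finset.sum_nonneg fun w _ => uTurnWeight_nonneg
  refine .of_bound (Q / 0.72) ?_
  filter_upwards [eventually_ge_atTop 2] with m hm
  obtain ⟨n, rfl⟩ := Nat.exists_eq_add_of_le' hm
  rw [Real.norm_of_nonneg (by positivity), Real.norm_of_nonneg (by positivity),
    div_mul_eq_mul_div Q, le_div_iff₀ (by norm_num), ← nsmul_eq_mul]
  calc _ ≤ ∑ w ∈ saws squareLattice 0 (n + 2) with
          (#(uTurns squareLattice (n + 2) w) : ℝ) < 1 / 300 * (n + 2 : ℕ),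
          1.011 ^ (n + 2) * uTurnWeight n w :=
        Finset.card_nsmul_le_sum _ _ _ fun w hw =>
          le_pow_mul_uTurnWeight (Finset.mem_filter.1 hw).2
    _ ≤ ∑ w ∈ saws squareLattice 0 (n + 2), 1.011 ^ (n + 2) * uTurnWeight n w :=
        Finset.sum_le_sum_of_subset_of_nonneg (Finset.filter_subset _ _) fun _ _ _ =>
          mul_nonneg (by positivity) uTurnWeight_nonneg
    _ ≤ 1.011 ^ (n + 2) * (2.44 ^ (n + 2) * Q) := by
        rw [← Finset.mul_sum]
        grw [sum_uTurnWeight_le]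
        gcongr <;> norm_num
    _ = (1.011 * 2.44) ^ (n + 2) * Q := by rw [mul_pow, mul_assoc]
    _ ≤ Q * 2.467 ^ (n + 2) := by
        rw [mul_comm]
        gcongr
        norm_num

theorem uTurnsDense_squareLattice : UTurnsDense squareLattice 0 := by
  refine ⟨1 / 300, by norm_num, isBigO_card_sparse.trans ?_⟩
  have hlittle : (fun n : ℕ => (n : ℝ) ^ 1 * 2.467 ^ n) =o[atTop] fun n : ℕ => (2.47 : ℝ) ^ n :=
    isLittleO_pow_const_mul_const_pow_const_pow_of_norm_lt 1 (by norm_num)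
  have hlower : (fun n : ℕ => (2.47 : ℝ) ^ n) =O[atTop]
      fun n : ℕ => (sawCount squareLattice 0 n : ℝ) := by
    refine .of_norm_le fun n => ?_
    rw [Real.norm_of_nonneg (by positivity)]
    exact pow_le_sawCount_squareLattice n
  refine ((hlittle.isBigO.trans hlower).mul
    (Asymptotics.isBigO_refl (fun n : ℕ => (n : ℝ)⁻¹) atTop)).congr' ?_ ?_
  · filter_upwards [eventually_gt_atTop 0] with n hn
    field_simp
  · exact .of_forall fun n => (div_eq_mul_inv _ _).symm

end UTurnDensity

end SelfAvoidingWalk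

/-- Kesten's ratio limit theorem for the square lattice: `σ_{n+2}/σ_n → μ²`. -/
theorem square_lattice_ratio_two (μ : ℝ)
    (hμ : Tendsto (fun n : ℕ => (sawCount squareLattice (0, 0) n : ℝ) ^ ((1 : ℝ) / n))
      atTop (nhds μ)) :
    Tendsto (fun n : ℕ =>
        (sawCount squareLattice (0, 0) (n + 2) : ℝ) / (sawCount squareLattice (0, 0) n : ℝ))
      atTop (nhds (μ ^ 2)) := by
  have hμ_ge : 2.47 ≤ μ := by
    refine ge_of_tendsto hμ ?_
    filter_upwards [eventually_ne_atTop 0] with n hn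
    rw [one_div, Real.le_rpow_inv_iff_of_pos (by norm_num) (by positivity) (by positivity),
      Real.rpow_natCast]
    exact SelfAvoidingWalk.pow_le_sawCount_squareLattice n
  exact SelfAvoidingWalk.tendsto_sawCount_ratio_two SelfAvoidingWalk.uTurnsDense_squareLattice
    (fun p => (SelfAvoidingWalk.squareLattice_degree p).le) (by linarith) hμ
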